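/- arXiv:0704.0329 — 4 statements merged into one kernel-verified Lean document; each statement's English description precedes it below -/
import Mathlib

section
/- Let α > 0 and γ > 0 be real, let a ∈ ℂ, and let s > 0 be real with s^α > |a|. Then ∫₀^∞ e^{−st} t^{γ−1} E_{α,γ}(−a t^α) dt = s^{α−γ} / (s^α + a). Equivalently, writing γ = α − β + 1 with α − β + 1 > 0, the Laplace transform of t^{α−β} E_{α,α−β+1}(−a t^α) is s^{β−1} / (s^α + a). -/
open scoped Real
open MeasureTheory

/-- Generalized Mittag-Leffler function `E_{α,γ}(z) = ∑ zⁿ / Γ(αn + γ)`. -/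
noncomputable def mittagLeffler (α γ : ℝ) (z : ℂ) : ℂ :=
  ∑' n : ℕ, z ^ n / (Real.Gamma (α * n + γ) : ℂ)

/-!
Expanding `E_{α,γ}(-a t^α)`, the integrand becomes a series of multiples of
`t^{αn+γ-1} e^{-st}`, whose integrals are Gamma integrals. The factor `Γ(αn + γ)` so produced
cancels the one in the series, leaving the geometric series `s^{-γ} ∑ (-a / s^α)ⁿ`. The condition
`|a| < s^α` makes it converge absolutely, which also justifies integrating term by term.
-/

section GammaIntegral

variable {r : ℝ}

lemma integrableOn_rpow_mul_exp_neg_mul_Ioi {p : ℝ} (hp : 0 < p) (hr : 0 < r) :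
    IntegrableOn (fun t : ℝ ↦ t ^ (p - 1) * Real.exp (-(r * t))) (Set.Ioi 0) := by
  simpa using integrableOn_rpow_mul_exp_neg_mul_rpow (by linarith : -1 < p - 1) one_pos hr

lemma integral_norm_rpow_mul_exp_neg_mul_smul_Ioi {E : Type*} [NormedAddCommGroup E]
    [NormedSpace ℝ E] {p : ℝ} (hp : 0 < p) (hr : 0 < r) (c : E) :
    ∫ t in Set.Ioi (0 : ℝ), ‖(t ^ (p - 1) * Real.exp (-(r * t))) • c‖ =
      ‖((1 / r) ^ p * Real.Gamma p) • c‖ := by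
  calc ∫ t in Set.Ioi (0 : ℝ), ‖(t ^ (p - 1) * Real.exp (-(r * t))) • c‖
      = ∫ t in Set.Ioi (0 : ℝ), t ^ (p - 1) * Real.exp (-(r * t)) * ‖c‖ := by
        refine setIntegral_congr_fun measurableSet_Ioi fun t (ht : 0 < t) ↦ ?_
        exact norm_smul_of_nonneg (by positivity) c
    _ = (1 / r) ^ p * Real.Gamma p * ‖c‖ := by
        rw [integral_mul_const, Real.integral_rpow_mul_exp_neg_mul_Ioi hp hr]
    _ = ‖((1 / r) ^ p * Real.Gamma p) • c‖ := (norm_smul_of_nonneg (by positivity) c).symm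

lemma hasSum_integral_rpow_mul_exp_neg_mul_smul_Ioi {E ι : Type*} [NormedAddCommGroup E]
    [NormedSpace ℝ E] [CompleteSpace E] [Countable ι] {p : ι → ℝ} {c : ι → E}
    (hp : ∀ i, 0 < p i) (hr : 0 < r)
    (hc : Summable fun i ↦ ‖((1 / r) ^ p i * Real.Gamma (p i)) • c i‖) :
    HasSum (fun i ↦ ((1 / r) ^ p i * Real.Gamma (p i)) • c i)
      (∫ t in Set.Ioi (0 : ℝ), ∑' i, (t ^ (p i - 1) * Real.exp (-(r * t))) • c i) := by
  have hint (i : ι) := (integrableOn_rpow_mul_exp_neg_mul_Ioi (hp i) hr).smul_const (c i)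
  simp only [← integral_norm_rpow_mul_exp_neg_mul_smul_Ioi (hp _) hr] at hc
  simpa only [integral_smul_const, Real.integral_rpow_mul_exp_neg_mul_Ioi (hp _) hr] using
    hasSum_integral_of_summable_integral_norm hint hc

end GammaIntegral

section MittagLeffler

variable (α γ : ℝ)

lemma exp_mul_rpow_mul_mittagLeffler_mul_rpow (s : ℝ) {t : ℝ} (ht : 0 < t) (z : ℂ) :
    Complex.exp (-(s * t : ℝ)) * ((t ^ (γ - 1) : ℝ) : ℂ) *
        mittagLeffler α γ (z * ((t ^ α : ℝ) : ℂ)) =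
      ∑' n : ℕ, (t ^ (α * n + γ - 1) * Real.exp (-(s * t))) •
        (z ^ n / (Real.Gamma (α * n + γ) : ℂ)) := by
  rw [mittagLeffler, ← tsum_mul_left]
  refine tsum_congr fun n ↦ ?_
  have hpow : t ^ (α * n + γ - 1) = (t ^ α) ^ n * t ^ (γ - 1) := by
    rw [add_sub_assoc, Real.rpow_add ht, Real.rpow_mul_natCast ht.le]
  rw [hpow, Complex.real_smul, mul_pow]
  push_cast
  ring

lemma one_div_rpow_mul_Gamma_smul_pow_div_Gamma {s : ℝ} (hs : 0 < s) {n : ℕ}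
    (hn : 0 < α * n + γ) (z : ℂ) :
    ((1 / s) ^ (α * n + γ) * Real.Gamma (α * n + γ)) • (z ^ n / (Real.Gamma (α * n + γ) : ℂ)) =
      s ^ (-γ) • (z / ((s ^ α : ℝ) : ℂ)) ^ n := by
  have hΓ : (Real.Gamma (α * n + γ) : ℂ) ≠ 0 := mod_cast (Real.Gamma_pos_of_pos hn).ne'
  have hpow : (1 / s) ^ (α * n + γ) = s ^ (-γ) * ((s ^ α) ^ n)⁻¹ := by
    rw [one_div, Real.inv_rpow hs.le, ← Real.rpow_neg hs.le, neg_add_rev, Real.rpow_add hs,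
      Real.rpow_neg hs.le (α * n), Real.rpow_mul_natCast hs.le]
  rw [hpow, Complex.real_smul, Complex.real_smul, div_pow]
  push_cast
  field_simp

end MittagLeffler

/-- Laplace transform of `t^{γ-1} E_{α,γ}(-a t^α)`:
`∫₀^∞ e^{-st} t^{γ-1} E_{α,γ}(-a t^α) dt = s^{α-γ} / (s^α + a)`
for real `α, γ > 0`, `a ∈ ℂ`, and real `s > 0` with `s^α > |a|`. -/
theorem laplace_mittagLeffler (α γ : ℝ) (hα : 0 < α) (hγ : 0 < γ) (a : ℂ)
    (s : ℝ) (hs : 0 < s) (hsa : ‖a‖ < s ^ α) :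
    ∫ t in Set.Ioi (0 : ℝ), Complex.exp (-(s * t : ℝ)) * ((t ^ (γ - 1) : ℝ) : ℂ) *
        mittagLeffler α γ (-a * ((t ^ α : ℝ) : ℂ)) =
      ((s ^ (α - γ) : ℝ) : ℂ) / (((s ^ α : ℝ) : ℂ) + a) := by
  have hsα : 0 < s ^ α := Real.rpow_pos_of_pos hs α
  have hratio : ‖-a / ((s ^ α : ℝ) : ℂ)‖ < 1 := by
    rwa [norm_div, norm_neg, Complex.norm_of_nonneg hsα.le, div_lt_one hsα]
  have hpos (n : ℕ) : 0 < α * n + γ := by positivity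
  have hterm (n : ℕ) := one_div_rpow_mul_Gamma_smul_pow_div_Gamma α γ hs (hpos n) (-a)
  have hgeom : HasSum (fun n : ℕ ↦ s ^ (-γ) • (-a / ((s ^ α : ℝ) : ℂ)) ^ n)
      (s ^ (-γ) • (1 - -a / ((s ^ α : ℝ) : ℂ))⁻¹) :=
    (hasSum_geometric_of_norm_lt_one hratio).const_smul _
  have hlaplace := hasSum_integral_rpow_mul_exp_neg_mul_smul_Ioi hpos hs
    (c := fun n : ℕ ↦ (-a) ^ n / (Real.Gamma (α * n + γ) : ℂ))
    (by simpa only [hterm] using hgeom.summable.norm)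
  simp only [hterm] at hlaplace
  calc
    _ = ∫ t in Set.Ioi (0 : ℝ), ∑' n : ℕ, (t ^ (α * n + γ - 1) * Real.exp (-(s * t))) •
          ((-a) ^ n / (Real.Gamma (α * n + γ) : ℂ)) :=
      setIntegral_congr_fun measurableSet_Ioi fun _ ht ↦
        exp_mul_rpow_mul_mittagLeffler_mul_rpow α γ s ht (-a)
    _ = s ^ (-γ) • (1 - -a / ((s ^ α : ℝ) : ℂ))⁻¹ := hlaplace.unique hgeom
    _ = ((s ^ (α - γ) : ℝ) : ℂ) / (((s ^ α : ℝ) : ℂ) + a) := by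
      have hsα' : ((s ^ α : ℝ) : ℂ) ≠ 0 := mod_cast hsα.ne'
      rw [neg_div, sub_neg_eq_add, one_add_div hsα', inv_div, Complex.real_smul, ← mul_div_assoc,
        ← Complex.ofReal_mul, ← Real.rpow_add hs, neg_add_eq_sub]
end

section
/- Let β ∈ (0,2], λ, c₁, c₂ ∈ ℂ, and let φ : [0,∞) → ℂ be continuous with |φ(t)| ≤ M e^{σt} for some constants M, σ. Define u(t) = c₁ E_{β,1}(−λ t^β) + c₂ t E_{β,2}(−λ t^β) + ∫₀^t φ(t−ξ) ξ^{β−1} E_{β,β}(−λ ξ^β) dξ. Then for every real s > max(σ, 0) with s^β > |λ|, the Laplace transform of u satisfies ∫₀^∞ e^{−st} u(t) dt = (c₁ s^{β−1} + c₂ s^{β−2} + Φ̃(s)) / (s^β + λ), where Φ̃(s) = ∫₀^∞ e^{−st} φ(t) dt. -/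
open scoped Real
open MeasureTheory

/-!
Since `∫₀^∞ e^{-st} t^{a-1} dt = Γ(a) s^{-a}`, transforming the power series
`t^{γ-1} E_{β,γ}(z t^β) = ∑ zⁿ t^{βn+γ-1} / Γ(βn+γ)` term by term cancels the Gamma factors and
leaves a geometric series of ratio `z / s^β`, with sum `s^{β-γ} / (s^β - z)`. The condition
`|z| < s^β` makes it converge absolutely, which also justifies the interchange of sum and integral.
The solution is a combination of such functions with `z = -λ` and `γ = 1, 2`, plus the convolution
of `φ` with the one with `γ = β`, whose transform is `1 / (s^β + λ)`.
-/

open Set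

lemma norm_exp_neg_mul_ofReal (s : ℂ) (t : ℝ) :
    ‖Complex.exp (-(s * t))‖ = Real.exp (-(s.re * t)) := by
  simp [Complex.norm_exp]

lemma integrable_tsum_of_summable_integral_norm {α ι : Type*} [MeasurableSpace α] {μ : Measure α}
    [Countable ι] {E : Type*} [NormedAddCommGroup E] [CompleteSpace E] {f : ι → α → E}
    (hf : ∀ i, Integrable (f i) μ) (hsum : Summable fun i => ∫ a, ‖f i a‖ ∂μ) :
    Integrable (fun a => ∑' i, f i a) μ := by
  refine ⟨.tsum fun i => (hf i).1, ?_⟩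
  calc ∫⁻ a, ‖∑' i, f i a‖ₑ ∂μ
      ≤ ∫⁻ a, ∑' i, ‖f i a‖ₑ ∂μ := lintegral_mono fun a => enorm_tsum_le_tsum_enorm
    _ = ∑' i, ENNReal.ofReal (∫ a, ‖f i a‖ ∂μ) := by
      rw [lintegral_tsum fun i => (hf i).1.enorm]
      simp_rw [ofReal_integral_norm_eq_lintegral_enorm (hf _)]
    _ < ⊤ := hsum.tsum_ofReal_lt_top

variable {E : Type*} [NormedAddCommGroup E] [NormedSpace ℂ E]

/-- The Laplace integral `∫₀^∞ e^{-st} f(t) dt` converges absolutely and equals `F`. Bundling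
convergence with the value, as `HasSum` does, keeps the junk value of a divergent integral out of
the transform rules. -/
def HasLaplaceTransformAt (f : ℝ → E) (s : ℂ) (F : E) : Prop :=
  IntegrableOn (fun t : ℝ => Complex.exp (-(s * t)) • f t) (Ioi 0) ∧
    ∫ t in Ioi (0 : ℝ), Complex.exp (-(s * t)) • f t = F

namespace HasLaplaceTransformAt

variable {f g : ℝ → E} {s : ℂ} {F G : E}

lemma congr (hf : HasLaplaceTransformAt f s F) (hfg : EqOn g f (Ioi 0)) :
    HasLaplaceTransformAt g s F := by
  have h : EqOn (fun t : ℝ => Complex.exp (-(s * t)) • g t)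
      (fun t : ℝ => Complex.exp (-(s * t)) • f t) (Ioi 0) := fun t ht => by simp only [hfg ht]
  exact ⟨hf.1.congr_fun h.symm measurableSet_Ioi,
    (setIntegral_congr_fun measurableSet_Ioi h).trans hf.2⟩

lemma add (hf : HasLaplaceTransformAt f s F) (hg : HasLaplaceTransformAt g s G) :
    HasLaplaceTransformAt (fun t => f t + g t) s (F + G) := by
  simp only [HasLaplaceTransformAt, smul_add]
  exact ⟨hf.1.add hg.1, by rw [integral_add hf.1 hg.1, hf.2, hg.2]⟩

lemma smul_const [CompleteSpace E] {k : ℝ → ℂ} {K : ℂ} (hk : HasLaplaceTransformAt k s K) (c : E) :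
    HasLaplaceTransformAt (fun t => k t • c) s (K • c) := by
  simp only [HasLaplaceTransformAt, ← smul_assoc]
  exact ⟨hk.1.smul_const c, by rw [integral_smul_const, hk.2]⟩

lemma of_norm_le_mul_exp {M σ : ℝ} (hf : AEStronglyMeasurable f (volume.restrict (Ioi 0)))
    (hbound : ∀ t > 0, ‖f t‖ ≤ M * Real.exp (σ * t)) (hs : σ < s.re) :
    HasLaplaceTransformAt f s (∫ t in Ioi (0 : ℝ), Complex.exp (-(s * t)) • f t) := by
  refine ⟨?_, rfl⟩
  have hdom : IntegrableOn (fun t : ℝ => M * Real.exp ((σ - s.re) * t)) (Ioi 0) :=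
    (integrableOn_exp_mul_Ioi (sub_neg.2 hs) 0).const_mul M
  refine hdom.mono' (.smul (by fun_prop) hf) ?_
  filter_upwards [ae_restrict_mem measurableSet_Ioi] with t ht
  calc ‖Complex.exp (-(s * t)) • f t‖
      ≤ Real.exp (-(s.re * t)) * (M * Real.exp (σ * t)) := by
        rw [norm_smul, norm_exp_neg_mul_ofReal]
        gcongr
        exact hbound t ht
    _ = M * Real.exp ((σ - s.re) * t) := by
        rw [mul_left_comm, ← Real.exp_add]
        ring_nf

lemma convolution [CompleteSpace E] {k : ℝ → ℂ} {K : ℂ} (hk : HasLaplaceTransformAt k s K)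
    (hf : HasLaplaceTransformAt f s F) :
    HasLaplaceTransformAt (fun t => ∫ ξ in (0 : ℝ)..t, k ξ • f (t - ξ)) s (K • F) := by
  have hexp : ∀ t : ℝ, Complex.exp (-(s * t)) • ∫ ξ in (0 : ℝ)..t, k ξ • f (t - ξ) =
      ∫ ξ in (0 : ℝ)..t, ContinuousLinearMap.lsmul ℝ ℂ (Complex.exp (-(s * ξ)) • k ξ)
        (Complex.exp (-(s * (t - ξ : ℝ))) • f (t - ξ)) := fun t => by
    rw [← intervalIntegral.integral_smul]
    refine intervalIntegral.integral_congr fun ξ _ => ?_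
    have hsplit : Complex.exp (-(s * t)) =
        Complex.exp (-(s * ξ)) * Complex.exp (-(s * (t - ξ : ℝ))) := by
      rw [← Complex.exp_add]
      push_cast
      ring_nf
    simp only [ContinuousLinearMap.lsmul_apply, smul_smul, hsplit, smul_eq_mul]
    ring_nf
  simp only [HasLaplaceTransformAt, hexp]
  constructor
  · have hint := integrable_posConvolution hk.1 hf.1 (ContinuousLinearMap.lsmul ℝ ℂ)
    exact hint.integrableOn.congr_fun (fun t ht => indicator_of_mem ht _) measurableSet_Ioi
  · rw [integral_posConvolution hk.1 hf.1, hk.2, hf.2, ContinuousLinearMap.lsmul_apply]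

lemma tsum [CompleteSpace E] {ι : Type*} [Countable ι] {f : ι → ℝ → E} {F : ι → E}
    (hf : ∀ i, HasLaplaceTransformAt (f i) s (F i))
    (hsum : Summable fun i => ∫ t in Ioi (0 : ℝ), ‖Complex.exp (-(s * t)) • f i t‖) :
    HasLaplaceTransformAt (fun t => ∑' i, f i t) s (∑' i, F i) := by
  simp only [HasLaplaceTransformAt, ← tsum_const_smul'']
  refine ⟨integrable_tsum_of_summable_integral_norm (fun i => (hf i).1) hsum, ?_⟩
  rw [← integral_tsum_of_summable_integral_norm (fun i => (hf i).1) hsum]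
  exact tsum_congr fun i => (hf i).2

end HasLaplaceTransformAt

lemma hasLaplaceTransformAt_rpow {a s : ℝ} (ha : 0 < a) (hs : 0 < s) :
    HasLaplaceTransformAt (fun t => ((t ^ (a - 1) : ℝ) : ℂ)) s
      (((1 / s) ^ a * Real.Gamma a : ℝ) : ℂ) := by
  have hreal : ∀ t : ℝ, Complex.exp (-(s * t)) • ((t ^ (a - 1) : ℝ) : ℂ) =
      ((t ^ (a - 1) * Real.exp (-(s * t)) : ℝ) : ℂ) := fun t => by
    push_cast [smul_eq_mul]
    ring
  have hint : IntegrableOn (fun t : ℝ => t ^ (a - 1) * Real.exp (-(s * t))) (Ioi 0) := by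
    simpa using integrableOn_rpow_mul_exp_neg_mul_rpow (by linarith : -1 < a - 1) one_pos hs
  simp only [HasLaplaceTransformAt, hreal]
  exact ⟨hint.ofReal, by
    rw [integral_complex_ofReal, Real.integral_rpow_mul_exp_neg_mul_Ioi ha hs]⟩

lemma integral_norm_exp_smul_rpow_smul {a s : ℝ} (ha : 0 < a) (hs : 0 < s) (c : E) :
    ∫ t in Ioi (0 : ℝ), ‖Complex.exp (-(s * t)) • ((t ^ (a - 1) : ℝ) : ℂ) • c‖ =
      (1 / s) ^ a * Real.Gamma a * ‖c‖ := by
  have hnorm : EqOn (fun t : ℝ => ‖Complex.exp (-(s * t)) • ((t ^ (a - 1) : ℝ) : ℂ) • c‖)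
      (fun t => t ^ (a - 1) * Real.exp (-(s * t)) * ‖c‖) (Ioi 0) := fun t (ht : 0 < t) => by
    simp only [norm_smul, norm_exp_neg_mul_ofReal, Complex.ofReal_re, Complex.norm_real,
      Real.norm_of_nonneg (Real.rpow_nonneg ht.le _)]
    ring
  rw [setIntegral_congr_fun measurableSet_Ioi hnorm, integral_mul_const,
    Real.integral_rpow_mul_exp_neg_mul_Ioi ha hs]

lemma hasLaplaceTransformAt_tsum_rpow_smul [CompleteSpace E] {ι : Type*} [Countable ι]
    {a : ι → ℝ} {c : ι → E} {s : ℝ} (ha : ∀ i, 0 < a i) (hs : 0 < s)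
    (hsum : Summable fun i => (1 / s) ^ a i * Real.Gamma (a i) * ‖c i‖) :
    HasLaplaceTransformAt (fun t => ∑' i, ((t ^ (a i - 1) : ℝ) : ℂ) • c i) s
      (∑' i, (((1 / s) ^ a i * Real.Gamma (a i) : ℝ) : ℂ) • c i) :=
  .tsum (fun i => (hasLaplaceTransformAt_rpow (ha i) hs).smul_const (c i))
    (hsum.congr fun i => (integral_norm_exp_smul_rpow_smul (ha i) hs (c i)).symm)

lemma rpow_sub_one_mul_mittagLeffler (β γ : ℝ) (z : ℂ) {t : ℝ} (ht : 0 < t) :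
    ((t ^ (γ - 1) : ℝ) : ℂ) * mittagLeffler β γ (z * ((t ^ β : ℝ) : ℂ)) =
      ∑' n : ℕ, ((t ^ (β * n + γ - 1) : ℝ) : ℂ) • (z ^ n / (Real.Gamma (β * n + γ) : ℂ)) := by
  rw [mittagLeffler, ← tsum_mul_left]
  refine tsum_congr fun n => ?_
  have hpow : t ^ (β * n + γ - 1) = t ^ (γ - 1) * (t ^ β) ^ n := by
    rw [← Real.rpow_mul_natCast ht.le, ← Real.rpow_add ht]
    ring_nf
  rw [hpow, mul_pow, smul_eq_mul]
  push_cast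
  ring

lemma hasSum_one_div_rpow_mul_pow {β s : ℝ} {z : ℂ} (γ : ℝ) (hs : 0 < s) (hz : ‖z‖ < s ^ β) :
    HasSum (fun n : ℕ => (((1 / s) ^ (β * n + γ) : ℝ) : ℂ) * z ^ n)
      (((s ^ (β - γ) : ℝ) : ℂ) / (((s ^ β : ℝ) : ℂ) - z)) := by
  have hsβ : 0 < s ^ β := Real.rpow_pos_of_pos hs β
  have hsβ' : ((s ^ β : ℝ) : ℂ) ≠ 0 := Complex.ofReal_ne_zero.2 hsβ.ne'
  have hratio : ‖z / ((s ^ β : ℝ) : ℂ)‖ < 1 := by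
    rwa [norm_div, Complex.norm_real, Real.norm_of_nonneg hsβ.le, div_lt_one hsβ]
  convert! (hasSum_geometric_of_norm_lt_one hratio).mul_left ((s ^ (-γ) : ℝ) : ℂ) using 1
  · funext n
    have hpow : (1 / s) ^ (β * n + γ) = s ^ (-γ) * ((s ^ β) ^ n)⁻¹ := by
      rw [one_div, Real.inv_rpow hs.le, Real.rpow_add hs, Real.rpow_mul_natCast hs.le, mul_inv,
        Real.rpow_neg hs.le, mul_comm]
    rw [hpow]
    push_cast
    ring
  · rw [sub_eq_add_neg β, Real.rpow_add hs, one_sub_div hsβ', inv_div]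
    push_cast
    ring

lemma hasLaplaceTransformAt_rpow_mul_mittagLeffler {β γ s : ℝ} {z : ℂ} (hβ : 0 ≤ β) (hγ : 0 < γ)
    (hs : 0 < s) (hz : ‖z‖ < s ^ β) :
    HasLaplaceTransformAt
      (fun t => ((t ^ (γ - 1) : ℝ) : ℂ) * mittagLeffler β γ (z * ((t ^ β : ℝ) : ℂ))) s
      (((s ^ (β - γ) : ℝ) : ℂ) / (((s ^ β : ℝ) : ℂ) - z)) := by
  have hpos : ∀ n : ℕ, 0 < β * n + γ := fun n => by positivity
  have hΓ : ∀ n : ℕ, 0 < Real.Gamma (β * n + γ) := fun n => Real.Gamma_pos_of_pos (hpos n)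
  have hcoeff : ∀ n : ℕ, (((1 / s) ^ (β * n + γ) * Real.Gamma (β * n + γ) : ℝ) : ℂ) •
      (z ^ n / (Real.Gamma (β * n + γ) : ℂ)) =
        (((1 / s) ^ (β * n + γ) : ℝ) : ℂ) * z ^ n := fun n => by
    rw [smul_eq_mul, Complex.ofReal_mul, mul_assoc,
      mul_div_cancel₀ _ (Complex.ofReal_ne_zero.2 (hΓ n).ne')]
  have hgeom := hasSum_one_div_rpow_mul_pow γ hs hz
  have hsum : Summable fun n : ℕ => (1 / s) ^ (β * n + γ) * Real.Gamma (β * n + γ) *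
      ‖z ^ n / (Real.Gamma (β * n + γ) : ℂ)‖ := by
    refine hgeom.summable.norm.congr fun n => ?_
    rw [← hcoeff, norm_smul, Complex.norm_real, Real.norm_of_nonneg]
    exact mul_nonneg (Real.rpow_nonneg (one_div_nonneg.2 hs.le) _) (hΓ n).le
  have hseries := hasLaplaceTransformAt_tsum_rpow_smul hpos hs hsum
  rw [tsum_congr hcoeff, hgeom.tsum_eq] at hseries
  exact hseries.congr fun t ht => rpow_sub_one_mul_mittagLeffler β γ z ht

theorem laplace_solution_fixed_mode_general [CompleteSpace E] {β s : ℝ} {lam : ℂ} {c₁ c₂ Φ : E}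
    {φ u : ℝ → E} (hβ : 0 < β) (hφ : HasLaplaceTransformAt φ s Φ)
    (hu : ∀ t > 0, u t =
      mittagLeffler β 1 (-lam * ((t ^ β : ℝ) : ℂ)) • c₁ +
      ((t : ℂ) * mittagLeffler β 2 (-lam * ((t ^ β : ℝ) : ℂ))) • c₂ +
      ∫ ξ in (0 : ℝ)..t, (((ξ ^ (β - 1) : ℝ) : ℂ) *
        mittagLeffler β β (-lam * ((ξ ^ β : ℝ) : ℂ))) • φ (t - ξ))
    (hs : 0 < s) (hsl : ‖lam‖ < s ^ β) :
    HasLaplaceTransformAt u s ((((s ^ β : ℝ) : ℂ) + lam)⁻¹ •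
      (((s ^ (β - 1) : ℝ) : ℂ) • c₁ + ((s ^ (β - 2) : ℝ) : ℂ) • c₂ + Φ)) := by
  rw [← norm_neg] at hsl
  have h₁ := (hasLaplaceTransformAt_rpow_mul_mittagLeffler hβ.le one_pos hs hsl).smul_const c₁
  have h₂ := (hasLaplaceTransformAt_rpow_mul_mittagLeffler hβ.le two_pos hs hsl).smul_const c₂
  have h₃ := (hasLaplaceTransformAt_rpow_mul_mittagLeffler hβ.le hβ hs hsl).convolution hφ
  convert ((h₁.add h₂).add h₃).congr fun t ht => ?_ using 1
  · simp only [sub_neg_eq_add, sub_self, Real.rpow_zero, Complex.ofReal_one, smul_add,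
      smul_smul, div_eq_inv_mul, mul_one]
  · norm_num [hu t ht]

/-- Transform-space content of the solution formula for the unified fractional
reaction-diffusion equation at a fixed Fourier mode: for `β ∈ (0,2]`, the Laplace
transform of
`u(t) = c₁ E_{β,1}(-λ t^β) + c₂ t E_{β,2}(-λ t^β) + ∫₀^t φ(t-ξ) ξ^{β-1} E_{β,β}(-λ ξ^β) dξ`
is `(c₁ s^{β-1} + c₂ s^{β-2} + Φ̃(s)) / (s^β + λ)` for `s > max(σ, 0)`, `s^β > |λ|`. -/
theorem laplace_solution_fixed_mode (β : ℝ) (hβ : β ∈ Set.Ioc (0 : ℝ) 2)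
    (lam c₁ c₂ : ℂ) (φ : ℝ → ℂ) (M σ : ℝ)
    (hφcont : ContinuousOn φ (Set.Ici 0))
    (hφbound : ∀ t ≥ (0 : ℝ), ‖φ t‖ ≤ M * Real.exp (σ * t))
    (u : ℝ → ℂ)
    (hu : ∀ t : ℝ, u t =
      c₁ * mittagLeffler β 1 (-lam * ((t ^ β : ℝ) : ℂ)) +
      c₂ * (t : ℂ) * mittagLeffler β 2 (-lam * ((t ^ β : ℝ) : ℂ)) +
      ∫ ξ in (0 : ℝ)..t, φ (t - ξ) * ((ξ ^ (β - 1) : ℝ) : ℂ) *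
        mittagLeffler β β (-lam * ((ξ ^ β : ℝ) : ℂ)))
    (s : ℝ) (hs : max σ 0 < s) (hsl : ‖lam‖ < s ^ β) :
    ∫ t in Set.Ioi (0 : ℝ), Complex.exp (-(s * t : ℝ)) * u t =
      (c₁ * ((s ^ (β - 1) : ℝ) : ℂ) + c₂ * ((s ^ (β - 2) : ℝ) : ℂ) +
          ∫ t in Set.Ioi (0 : ℝ), Complex.exp (-(s * t : ℝ)) * φ t) /
        (((s ^ β : ℝ) : ℂ) + lam) := by
  have hφ : HasLaplaceTransformAt φ s _ := .of_norm_le_mul_exp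
    ((hφcont.mono Ioi_subset_Ici_self).aestronglyMeasurable measurableSet_Ioi)
    (fun t ht => hφbound t (le_of_lt ht)) ((le_max_left σ 0).trans_lt hs)
  have h := laplace_solution_fixed_mode_general (c₁ := c₁) (c₂ := c₂) (u := u) hβ.1 hφ
    (fun t _ => by simp only [hu, smul_eq_mul, mul_comm, mul_left_comm, mul_assoc])
    ((le_max_right σ 0).trans_lt hs) hsl
  simpa only [smul_eq_mul, Complex.ofReal_mul, div_eq_inv_mul, mul_comm] using h.2
end

section
/- Let β ∈ (0,1), λ ∈ ℂ, c ∈ ℂ, and define u(t) = c E_{β,1}(−λ t^β) for t ≥ 0. Then u(0) = c, u is differentiable on (0,∞), and for every t > 0 the Caputo fractional derivative of order β of u satisfies (1/Γ(1−β)) ∫₀^t u′(τ) (t−τ)^{−β} dτ = −λ u(t). -/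
open scoped Real
open MeasureTheory

/-!
Riemann–Liouville integration of order `δ` shifts the second parameter of the Mittag-Leffler
function up by `δ`,
`∫₀ᵗ τ^(γ-1) E_{α,γ}(z τ^α) (t-τ)^(δ-1) dτ = Γ(δ) t^(γ+δ-1) E_{α,γ+δ}(z t^α)`,
because termwise it is Euler's Beta integral, and differentiation of `t^(γ-1) E_{α,γ}(z t^α)`
shifts it down by `1`. Hence the derivative of `E_{β,1}(z t^β)` is
`t⁻¹ E_{β,0}(z t^β) = z t^(β-1) E_{β,β}(z t^β)`, and integrating it to order `1 - β` gives back
`z E_{β,1}(z t^β)`.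
-/

open Filter Asymptotics

-- By convexity, the slope of `log Γ` over `[x + 1, x + 1 + a]` is at least its slope over
-- `[x, x + 1]`, which is `log x`.
theorem rpow_mul_Gamma_add_one_le_Gamma_add {x a : ℝ} (hx : 0 < x) (ha : 0 ≤ a) :
    x ^ a * Real.Gamma (x + 1) ≤ Real.Gamma (x + 1 + a) := by
  obtain rfl | ha := ha.eq_or_lt
  · simp
  have hΓ : 0 < Real.Gamma x := Real.Gamma_pos_of_pos hx
  have hΓ₁ : 0 < Real.Gamma (x + 1) := Real.Gamma_pos_of_pos (by positivity)
  have hΓa : 0 < Real.Gamma (x + 1 + a) := Real.Gamma_pos_of_pos (by positivity)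
  have log_Gamma_add_one : Real.log (Real.Gamma (x + 1)) =
      Real.log x + Real.log (Real.Gamma x) := by
    rw [Real.Gamma_add_one hx.ne', Real.log_mul hx.ne' hΓ.ne']
  have slope_le := Real.convexOn_log_Gamma.slope_mono_adjacent (x := x) (y := x + 1)
    (z := x + 1 + a) hx (Set.mem_Ioi.2 (by positivity)) (by linarith) (by linarith)
  simp only [Function.comp_apply, add_sub_cancel_left, div_one, le_div_iff₀ ha,
    log_Gamma_add_one] at slope_le
  rw [← Real.log_le_log_iff (by positivity) hΓa, Real.log_mul (by positivity) hΓ₁.ne',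
    Real.log_rpow hx, log_Gamma_add_one]
  linarith

theorem isLittleO_Gamma_Gamma_add {a : ℝ} (ha : 0 < a) :
    Real.Gamma =o[atTop] fun x ↦ Real.Gamma (x + a) := by
  refine isLittleO_iff.2 fun ε hε ↦ ?_
  have rpow_large : ∀ᶠ x : ℝ in atTop, ε⁻¹ ≤ (x - 1) ^ a :=
    ((tendsto_rpow_atTop ha).comp (tendsto_atTop_add_const_right atTop (-1) tendsto_id))
      |>.eventually_ge_atTop _
  filter_upwards [rpow_large, eventually_gt_atTop 1] with x hx hx₁
  have hΓ : 0 < Real.Gamma x := Real.Gamma_pos_of_pos (by linarith)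
  have hΓa : 0 < Real.Gamma (x + a) := Real.Gamma_pos_of_pos (by linarith)
  rw [Real.norm_of_nonneg hΓ.le, Real.norm_of_nonneg hΓa.le, ← inv_mul_le_iff₀ hε]
  have growth := rpow_mul_Gamma_add_one_le_Gamma_add (sub_pos.2 hx₁) ha.le
  rw [sub_add_cancel] at growth
  exact le_trans (by gcongr) growth

-- At `s = 0` both sides vanish, since `Real.Gamma 0 = 0`.
theorem self_div_Gamma_add_one (s : ℝ) : s / Real.Gamma (s + 1) = 1 / Real.Gamma s := by
  obtain rfl | hs := eq_or_ne s 0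
  · simp
  · rw [Real.Gamma_add_one hs, div_mul_cancel_left₀ hs, one_div]

theorem integral_rpow_mul_sub_rpow {a b t : ℝ} (ha : 0 < a) (hb : 0 < b) (ht : 0 < t) :
    ∫ τ in (0 : ℝ)..t, τ ^ (a - 1) * (t - τ) ^ (b - 1) =
      t ^ (a + b - 1) * ProbabilityTheory.beta a b := by
  have scaled := Complex.betaIntegral_scaled a b ht
  rw [Complex.betaIntegral_eq_Gamma_mul_div _ _ (by simpa) (by simpa)] at scaled
  rw [← Complex.ofReal_inj, ← intervalIntegral.integral_ofReal]
  calc ∫ τ in (0 : ℝ)..t, ((τ ^ (a - 1) * (t - τ) ^ (b - 1) : ℝ) : ℂ)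
    _ = ∫ τ in (0 : ℝ)..t, (τ : ℂ) ^ (a - 1 : ℂ) * (t - τ : ℂ) ^ (b - 1 : ℂ) := by
      refine intervalIntegral.integral_congr fun τ hτ ↦ ?_
      rw [Set.uIcc_of_le ht.le] at hτ
      simp [Complex.ofReal_cpow hτ.1, Complex.ofReal_cpow (sub_nonneg.2 hτ.2)]
    _ = ((t ^ (a + b - 1) * ProbabilityTheory.beta a b : ℝ) : ℂ) := by
      simp [scaled, ProbabilityTheory.beta, Complex.ofReal_cpow ht.le, ← Complex.Gamma_ofReal]

theorem intervalIntegrable_rpow_mul_sub_rpow {a b t : ℝ} (ha : 0 < a) (hb : 0 < b) (ht : 0 < t) :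
    IntervalIntegrable (fun τ ↦ τ ^ (a - 1) * (t - τ) ^ (b - 1)) volume 0 t := by
  refine intervalIntegral.intervalIntegrable_of_integral_ne_zero ?_
  rw [integral_rpow_mul_sub_rpow ha hb ht]
  have := ProbabilityTheory.beta_pos ha hb
  positivity

theorem rpow_mul_natCast_add {x : ℝ} (hx : 0 < x) (a : ℝ) (n : ℕ) (b : ℝ) :
    x ^ (a * n + b) = x ^ b * (x ^ a) ^ n := by
  rw [Real.rpow_add hx, Real.rpow_mul hx.le, Real.rpow_natCast, mul_comm]

theorem hasSum_integral_smul_of_nonneg {ι X E : Type*} [Countable ι] [MeasurableSpace X]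
    {μ : Measure X} [NormedAddCommGroup E] [NormedSpace ℝ E] [CompleteSpace E]
    {k : ι → X → ℝ} {c : ι → E} (k_int : ∀ i, Integrable (k i) μ) (k_nonneg : ∀ i, 0 ≤ᵐ[μ] k i)
    (summable_norm : Summable fun i ↦ ‖(∫ x, k i x ∂μ) • c i‖) :
    HasSum (fun i ↦ (∫ x, k i x ∂μ) • c i) (∫ x, ∑' i, k i x • c i ∂μ) := by
  have integral_norm (i : ι) : ∫ x, ‖k i x • c i‖ ∂μ = ‖(∫ x, k i x ∂μ) • c i‖ := by
    simp_rw [norm_smul, integral_mul_const,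
      Real.norm_of_nonneg (integral_nonneg_of_ae (k_nonneg i))]
    congr 1
    exact integral_congr_ae ((k_nonneg i).mono fun x hx ↦ Real.norm_of_nonneg hx)
  simpa only [integral_smul_const] using
    hasSum_integral_of_summable_integral_norm (fun i ↦ (k_int i).smul_const (c i))
      (by simpa only [integral_norm])

theorem norm_pow_div_le {w : ℂ} {R : ℝ} (hw : ‖w‖ ≤ R) (n : ℕ) (a : ℂ) :
    ‖w ^ n / a‖ ≤ ‖(R : ℂ) ^ n / a‖ := by
  have hR : 0 ≤ R := (norm_nonneg w).trans hw
  simp only [norm_div, norm_pow, Complex.norm_real, Real.norm_of_nonneg hR]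
  gcongr

section MittagLeffler

variable {α : ℝ}

theorem summable_mittagLeffler (hα : 0 < α) (γ : ℝ) (z : ℂ) :
    Summable fun n : ℕ ↦ z ^ n / (Real.Gamma (α * n + γ) : ℂ) := by
  have arg_atTop : Tendsto (fun n : ℕ ↦ α * n + γ) atTop atTop :=
    tendsto_atTop_add_const_right _ _ (tendsto_natCast_atTop_atTop.const_mul_atTop hα)
  have Gamma_le := arg_atTop.eventually <|
    (isLittleO_Gamma_Gamma_add hα).def (c := (2 * (‖z‖ + 1))⁻¹) (by positivity)
  refine summable_of_ratio_norm_eventually_le one_half_lt_one ?_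
  filter_upwards [Gamma_le, arg_atTop.eventually_gt_atTop 0] with n hn hpos
  have hΓ : 0 < Real.Gamma (α * n + γ) := Real.Gamma_pos_of_pos hpos
  have hΓα : 0 < Real.Gamma (α * n + γ + α) := Real.Gamma_pos_of_pos (by positivity)
  have arg_succ : α * (n + 1 : ℕ) + γ = α * n + γ + α := by push_cast; ring
  rw [Real.norm_of_nonneg hΓ.le, Real.norm_of_nonneg hΓα.le, le_inv_mul_iff₀ (by positivity)] at hn
  simp only [arg_succ, norm_div, norm_pow, Complex.norm_real, Real.norm_of_nonneg hΓ.le,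
    Real.norm_of_nonneg hΓα.le]
  rw [← mul_div_assoc, div_le_div_iff₀ hΓα hΓ]
  calc ‖z‖ ^ (n + 1) * Real.Gamma (α * n + γ)
    _ ≤ ‖z‖ ^ n * ((‖z‖ + 1) * Real.Gamma (α * n + γ)) := by
      rw [pow_succ, mul_assoc]; gcongr; exact (lt_add_one ‖z‖).le
    _ ≤ 1 / 2 * ‖z‖ ^ n * Real.Gamma (α * n + γ + α) := by
      rw [mul_comm (1 / 2), mul_assoc]; gcongr ‖z‖ ^ n * ?_; linarith

theorem hasSum_mittagLeffler (hα : 0 < α) (γ : ℝ) (z : ℂ) :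
    HasSum (fun n : ℕ ↦ z ^ n / (Real.Gamma (α * n + γ) : ℂ)) (mittagLeffler α γ z) :=
  (summable_mittagLeffler hα γ z).hasSum

theorem mittagLeffler_eq_add_mul (hα : 0 < α) (γ : ℝ) (z : ℂ) :
    mittagLeffler α γ z = 1 / (Real.Gamma γ : ℂ) + z * mittagLeffler α (γ + α) z := by
  have arg_succ (n : ℕ) : α * (n + 1 : ℕ) + γ = α * n + (γ + α) := by push_cast; ring
  rw [mittagLeffler, (summable_mittagLeffler hα γ z).tsum_eq_zero_add, mittagLeffler,
    ← tsum_mul_left]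
  simp only [arg_succ, pow_succ', mul_div_assoc]
  simp

theorem mittagLeffler_apply_zero (hα : 0 < α) (γ : ℝ) :
    mittagLeffler α γ 0 = 1 / (Real.Gamma γ : ℂ) := by
  simpa using mittagLeffler_eq_add_mul hα γ 0

-- The constant term drops out because `Real.Gamma 0 = 0`, so that `1 / Γ(0) = 0` as it should be.
theorem mittagLeffler_zero_right (hα : 0 < α) (z : ℂ) :
    mittagLeffler α 0 z = z * mittagLeffler α α z := by
  simpa using mittagLeffler_eq_add_mul hα 0 z

theorem differentiable_mittagLeffler (hα : 0 < α) (γ : ℝ) :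
    Differentiable ℂ (mittagLeffler α γ) := by
  intro z
  refine (Complex.differentiableOn_tsum_of_summable_norm
    (summable_mittagLeffler hα γ ((‖z‖ + 1 : ℝ) : ℂ)).norm (fun n ↦ by fun_prop)
    Metric.isOpen_ball fun n w hw ↦ norm_pow_div_le (mem_ball_zero_iff.1 hw).le n _)
    |>.differentiableAt (Metric.isOpen_ball.mem_nhds ?_)
  simp

theorem hasSum_deriv_mittagLeffler (hα : 0 < α) (γ : ℝ) (z : ℂ) :
    HasSum (fun n : ℕ ↦ n * z ^ (n - 1) / (Real.Gamma (α * n + γ) : ℂ))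
      (deriv (mittagLeffler α γ) z) := by
  have hasSum_deriv : HasSum _ (deriv (mittagLeffler α γ) z) :=
    Complex.hasSum_deriv_of_summable_norm
      (summable_mittagLeffler hα γ ((‖z‖ + 1 : ℝ) : ℂ)).norm
      (fun n ↦ by fun_prop) Metric.isOpen_ball
      (fun n w hw ↦ norm_pow_div_le (mem_ball_zero_iff.1 hw).le n _)
      (mem_ball_zero_iff.2 (lt_add_one ‖z‖))
  simpa using hasSum_deriv

theorem mul_deriv_mittagLeffler (hα : 0 < α) (γ : ℝ) (z : ℂ) :
    α * z * deriv (mittagLeffler α γ) z =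
      mittagLeffler α (γ - 1) z - (γ - 1) * mittagLeffler α γ z := by
  have Gamma_shift (n : ℕ) : 1 / (Real.Gamma (α * n + (γ - 1)) : ℂ) =
      (α * n + (γ - 1)) / Real.Gamma (α * n + γ) := by
    have := self_div_Gamma_add_one (α * n + (γ - 1))
    rw [add_assoc, sub_add_cancel] at this
    exact_mod_cast this.symm
  have mul_pow_pred (n : ℕ) : z * (n * z ^ (n - 1)) = n * z ^ n := by
    obtain rfl | hn := eq_or_ne n 0
    · simp
    · rw [mul_left_comm, mul_pow_sub_one hn]
  have term_eq (n : ℕ) : α * z * (n * z ^ (n - 1) / (Real.Gamma (α * n + γ) : ℂ)) =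
      z ^ n / (Real.Gamma (α * n + (γ - 1)) : ℂ) -
        (γ - 1) * (z ^ n / (Real.Gamma (α * n + γ) : ℂ)) := by
    rw [div_eq_mul_one_div (z ^ n) (Real.Gamma (α * n + (γ - 1)) : ℂ), Gamma_shift]
    linear_combination (α / Real.Gamma (α * n + γ) : ℂ) * mul_pow_pred n
  have hasSum_deriv := (hasSum_deriv_mittagLeffler hα γ z).mul_left (α * z : ℂ)
  simp only [term_eq] at hasSum_deriv
  exact hasSum_deriv.unique ((hasSum_mittagLeffler hα (γ - 1) z).sub
    ((hasSum_mittagLeffler hα γ z).mul_left (γ - 1 : ℂ)))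

theorem hasDerivAt_rpow_mul_mittagLeffler (hα : 0 < α) (γ : ℝ) (z : ℂ) {t : ℝ} (ht : 0 < t) :
    HasDerivAt
      (fun x : ℝ ↦ ((x ^ (γ - 1) : ℝ) : ℂ) * mittagLeffler α γ (z * ((x ^ α : ℝ) : ℂ)))
      (((t ^ (γ - 2) : ℝ) : ℂ) * mittagLeffler α (γ - 1) (z * ((t ^ α : ℝ) : ℂ))) t := by
  have deriv_rpow (p : ℝ) :
      HasDerivAt (fun x : ℝ ↦ ((x ^ p : ℝ) : ℂ)) ((p * t ^ (p - 1) : ℝ) : ℂ) t :=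
    (Real.hasDerivAt_rpow_const (Or.inl ht.ne')).ofReal_comp
  have deriv_comp : HasDerivAt (fun x : ℝ ↦ mittagLeffler α γ (z * ((x ^ α : ℝ) : ℂ))) _ t :=
    (differentiable_mittagLeffler hα γ _).hasDerivAt.comp t ((deriv_rpow α).const_mul z)
  refine ((deriv_rpow (γ - 1)).mul deriv_comp).congr_deriv ?_
  have rpow_mul_rpow : ((t ^ (γ - 1) : ℝ) : ℂ) * ((t ^ (α - 1) : ℝ) : ℂ) =
      ((t ^ (γ - 2) : ℝ) : ℂ) * ((t ^ α : ℝ) : ℂ) := by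
    norm_cast
    rw [← Real.rpow_add ht, ← Real.rpow_add ht]
    ring_nf
  rw [show γ - 1 - 1 = γ - 2 by ring]
  push_cast
  linear_combination
    ((t ^ (γ - 2) : ℝ) : ℂ) * mul_deriv_mittagLeffler hα γ (z * ((t ^ α : ℝ) : ℂ)) +
    α * z * deriv (mittagLeffler α γ) (z * ((t ^ α : ℝ) : ℂ)) * rpow_mul_rpow

theorem hasDerivAt_mittagLeffler_one_rpow (hα : 0 < α) (z : ℂ) {t : ℝ} (ht : 0 < t) :
    HasDerivAt (fun x : ℝ ↦ mittagLeffler α 1 (z * ((x ^ α : ℝ) : ℂ)))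
      (z * (((t ^ (α - 1) : ℝ) : ℂ) * mittagLeffler α α (z * ((t ^ α : ℝ) : ℂ)))) t := by
  have h := hasDerivAt_rpow_mul_mittagLeffler hα 1 z ht
  simp only [sub_self, Real.rpow_zero, Complex.ofReal_one, one_mul] at h
  refine h.congr_deriv ?_
  rw [mittagLeffler_zero_right hα, show (1 : ℝ) - 2 = -1 by norm_num,
    Real.rpow_sub_one ht.ne', Real.rpow_neg_one]
  push_cast
  ring

theorem rpow_mul_mittagLeffler_eq_tsum (γ : ℝ) (z : ℂ) {t : ℝ} (ht : 0 < t) :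
    ((t ^ (γ - 1) : ℝ) : ℂ) * mittagLeffler α γ (z * ((t ^ α : ℝ) : ℂ)) =
      ∑' n : ℕ, t ^ (α * n + γ - 1) • (z ^ n / (Real.Gamma (α * n + γ) : ℂ)) := by
  rw [mittagLeffler, ← tsum_mul_left]
  refine tsum_congr fun n ↦ ?_
  rw [add_sub_assoc, rpow_mul_natCast_add ht, Complex.real_smul]
  push_cast
  ring

theorem integral_rpow_mul_sub_rpow_smul_div_Gamma {γ δ t : ℝ} (hα : 0 < α) (hγ : 0 < γ)
    (hδ : 0 < δ) (z : ℂ) (ht : 0 < t) (n : ℕ) :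
    (∫ τ in (0 : ℝ)..t, τ ^ (α * n + γ - 1) * (t - τ) ^ (δ - 1)) •
        (z ^ n / (Real.Gamma (α * n + γ) : ℂ)) =
      (Real.Gamma δ : ℂ) * ((t ^ (γ + δ - 1) : ℝ) : ℂ) *
        ((z * ((t ^ α : ℝ) : ℂ)) ^ n / (Real.Gamma (α * n + (γ + δ)) : ℂ)) := by
  have hΓ : (Real.Gamma (α * n + γ) : ℂ) ≠ 0 :=
    Complex.ofReal_ne_zero.2 (Real.Gamma_pos_of_pos (by positivity)).ne'
  rw [integral_rpow_mul_sub_rpow (by positivity) hδ ht, ProbabilityTheory.beta, add_assoc,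
    add_sub_assoc, rpow_mul_natCast_add ht, Complex.real_smul, mul_pow]
  push_cast
  field_simp

theorem integral_rpow_mul_mittagLeffler_mul_sub_rpow {γ δ t : ℝ} (hα : 0 < α) (hγ : 0 < γ)
    (hδ : 0 < δ) (z : ℂ) (ht : 0 < t) :
    ∫ τ in (0 : ℝ)..t, ((τ ^ (γ - 1) : ℝ) : ℂ) * mittagLeffler α γ (z * ((τ ^ α : ℝ) : ℂ)) *
        (((t - τ) ^ (δ - 1) : ℝ) : ℂ) =
      (Real.Gamma δ : ℂ) * ((t ^ (γ + δ - 1) : ℝ) : ℂ) *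
        mittagLeffler α (γ + δ) (z * ((t ^ α : ℝ) : ℂ)) := by
  let k (n : ℕ) (τ : ℝ) : ℝ := τ ^ (α * n + γ - 1) * (t - τ) ^ (δ - 1)
  let c (n : ℕ) : ℂ := z ^ n / (Real.Gamma (α * n + γ) : ℂ)
  have hasSum_terms := (hasSum_mittagLeffler hα (γ + δ) (z * ((t ^ α : ℝ) : ℂ))).mul_left
    ((Real.Gamma δ : ℂ) * ((t ^ (γ + δ - 1) : ℝ) : ℂ))
  simp only [← integral_rpow_mul_sub_rpow_smul_div_Gamma hα hγ hδ z ht,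
    intervalIntegral.integral_of_le ht.le] at hasSum_terms
  have k_integrable (n : ℕ) : IntegrableOn (k n) (Set.Ioc 0 t) :=
    (intervalIntegrable_rpow_mul_sub_rpow (by positivity) hδ ht).1
  have k_nonneg (n : ℕ) : 0 ≤ᵐ[volume.restrict (Set.Ioc 0 t)] k n := by
    filter_upwards [ae_restrict_mem measurableSet_Ioc] with τ hτ
    exact mul_nonneg (Real.rpow_nonneg hτ.1.le _) (Real.rpow_nonneg (sub_nonneg.2 hτ.2) _)
  have integrand_eq_tsum : ∀ τ ∈ Set.Ioc 0 t,
      ((τ ^ (γ - 1) : ℝ) : ℂ) * mittagLeffler α γ (z * ((τ ^ α : ℝ) : ℂ)) *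
        (((t - τ) ^ (δ - 1) : ℝ) : ℂ) = ∑' n, k n τ • c n := fun τ hτ ↦ by
    rw [rpow_mul_mittagLeffler_eq_tsum γ z hτ.1, ← tsum_mul_right]
    refine tsum_congr fun n ↦ ?_
    simp only [k, c, Complex.real_smul, Complex.ofReal_mul]
    ring
  rw [intervalIntegral.integral_of_le ht.le,
    setIntegral_congr_fun measurableSet_Ioc integrand_eq_tsum]
  exact (hasSum_integral_smul_of_nonneg k_integrable k_nonneg hasSum_terms.summable.norm).unique
    hasSum_terms

theorem integral_rpow_mul_mittagLeffler_self_mul_sub_rpow_neg {t : ℝ} (hα₀ : 0 < α) (hα₁ : α < 1)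
    (z : ℂ) (ht : 0 < t) :
    ∫ τ in (0 : ℝ)..t, ((τ ^ (α - 1) : ℝ) : ℂ) * mittagLeffler α α (z * ((τ ^ α : ℝ) : ℂ)) *
        (((t - τ) ^ (-α) : ℝ) : ℂ) =
      (Real.Gamma (1 - α) : ℂ) * mittagLeffler α 1 (z * ((t ^ α : ℝ) : ℂ)) := by
  simpa using integral_rpow_mul_mittagLeffler_mul_sub_rpow hα₀ hα₀ (sub_pos.2 hα₁) z ht

end MittagLeffler

/-- For `β ∈ (0,1)`, the function `u(t) = c E_{β,1}(-λ t^β)` satisfies `u(0) = c`,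
is differentiable on `(0,∞)`, and its Caputo derivative of order `β` equals `-λ u(t)`:
`(1/Γ(1-β)) ∫₀^t u′(τ) (t-τ)^{-β} dτ = -λ u(t)` for all `t > 0`. -/
theorem caputo_mittagLeffler_eigen (β : ℝ) (hβ : β ∈ Set.Ioo (0 : ℝ) 1)
    (lam c : ℂ) (u : ℝ → ℂ)
    (hu : ∀ t : ℝ, u t = c * mittagLeffler β 1 (-lam * ((t ^ β : ℝ) : ℂ))) :
    u 0 = c ∧ (∀ t : ℝ, 0 < t → DifferentiableAt ℝ u t) ∧
      ∀ t : ℝ, 0 < t →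
        (1 / (Real.Gamma (1 - β) : ℂ)) *
            ∫ τ in (0 : ℝ)..t, deriv u τ * (((t - τ) ^ (-β) : ℝ) : ℂ) =
          -lam * u t := by
  obtain ⟨hβ₀, hβ₁⟩ := hβ
  have hasDerivAt_u (t : ℝ) (ht : 0 < t) :
      HasDerivAt u (c * (-lam * (((t ^ (β - 1) : ℝ) : ℂ) *
        mittagLeffler β β (-lam * ((t ^ β : ℝ) : ℂ))))) t := by
    simpa only [funext hu] using (hasDerivAt_mittagLeffler_one_rpow hβ₀ (-lam) ht).const_mul c
  refine ⟨?_, fun t ht ↦ (hasDerivAt_u t ht).differentiableAt, fun t ht ↦ ?_⟩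
  · simp [hu, Real.zero_rpow hβ₀.ne', mittagLeffler_apply_zero hβ₀]
  have integral_deriv_u : ∫ τ in (0 : ℝ)..t, deriv u τ * (((t - τ) ^ (-β) : ℝ) : ℂ) =
      c * -lam * (Real.Gamma (1 - β) * mittagLeffler β 1 (-lam * ((t ^ β : ℝ) : ℂ))) := by
    rw [← integral_rpow_mul_mittagLeffler_self_mul_sub_rpow_neg hβ₀ hβ₁ (-lam) ht,
      ← intervalIntegral.integral_const_mul]
    refine intervalIntegral.integral_congr_ae (.of_forall fun τ hτ ↦ ?_)
    rw [Set.uIoc_of_le ht.le] at hτ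
    rw [(hasDerivAt_u τ hτ.1).deriv]
    ring
  have hΓ : (Real.Gamma (1 - β) : ℂ) ≠ 0 :=
    Complex.ofReal_ne_zero.2 (Real.Gamma_pos_of_pos (sub_pos.2 hβ₁)).ne'
  rw [integral_deriv_u, hu]
  field_simp
end

section
/- Let α ∈ (0,1) and θ be real with |θ| ≤ α, and let f : ℝ → ℂ be a Schwartz function. Define (D_θ^α f)(x) = (Γ(1+α)/π) { sin((α+θ)π/2) ∫₀^∞ (f(x+ξ) − f(x)) ξ^{−1−α} dξ + sin((α−θ)π/2) ∫₀^∞ (f(x−ξ) − f(x)) ξ^{−1−α} dξ }. Then both integrals converge absolutely for every x, and for every real k, ∫_ℝ e^{ikx} (D_θ^α f)(x) dx = −|k|^α exp(i·sign(k)·θπ/2) · ∫_ℝ e^{ikx} f(x) dx. -/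
open scoped Real
open MeasureTheory

open Complex Filter Set Topology

/-! Translating by `s t` multiplies the Fourier transform of `f` at `k` by `e^{-ikst}`, so by Fubini
the one-sided integral in the direction `s = ±1` acts on it as multiplication by `J(iks)`, where
`J(r) = ∫₀^∞ (e^{-rt} - 1) t^{-1-α} dt`. Fubini applies because `f, f' ∈ L¹` give
`‖f(· + h) - f‖₁ ≤ C min(1, |h|)`. For `Re r > 0`, integration by parts and the Laplace transform of
`t^{-α}` give `J(r) = -Γ(1-α)/α · r^α`, which extends to the imaginary axis by continuity. The
reflection formula and a trigonometric identity then combine the two one-sided multipliers into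
the Riesz–Feller symbol. -/

section Kernel

lemma le_add_mul_min_one {A B t y : ℝ} (hA : 0 ≤ A) (hB : 0 ≤ B) (ht : 0 ≤ t) (hyA : y ≤ A)
    (hyB : y ≤ B * t) : y ≤ (A + B) * min 1 t := by
  rcases le_total 1 t with h | h
  · rw [min_eq_left h]
    linarith
  · rw [min_eq_right h]
    nlinarith

lemma integrableOn_min_one_div_rpow {α : ℝ} (hα : α ∈ Ioo (0 : ℝ) 1) :
    IntegrableOn (fun t : ℝ ↦ min 1 t / t ^ (1 + α)) (Ioi 0) := by
  rw [← Ioc_union_Ioi_eq_Ioi zero_le_one]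
  refine IntegrableOn.union ?_ ?_
  · have h : IntegrableOn (fun t : ℝ ↦ t ^ (-α)) (Ioc 0 1) := by
      rw [← intervalIntegrable_iff_integrableOn_Ioc_of_le zero_le_one]
      exact intervalIntegral.intervalIntegrable_rpow' (by linarith [hα.2])
    refine h.congr_fun (fun t ht ↦ ?_) measurableSet_Ioc
    dsimp only
    rw [min_eq_right ht.2, Real.rpow_one_add' ht.1.le (by linarith [hα.1]), Real.rpow_neg ht.1.le,
      div_mul_cancel_left₀ ht.1.ne']
  · refine (integrableOn_Ioi_rpow_of_lt (a := -(1 + α)) (by linarith [hα.1])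
      zero_lt_one).congr_fun (fun t (ht : 1 < t) ↦ ?_) measurableSet_Ioi
    dsimp only
    rw [min_eq_left ht.le, Real.rpow_neg (by linarith), one_div]

lemma norm_exp_sub_one_le_of_re_nonpos {z : ℂ} (hz : z.re ≤ 0) : ‖exp z - 1‖ ≤ ‖z‖ := by
  have h := (convex_halfSpace_re_le 0).norm_image_sub_le_of_norm_deriv_le (𝕜 := ℂ)
    (f := exp) (C := 1) (x := 0) (y := z) (fun x _ ↦ differentiableAt_exp)
    (fun x hx ↦ by rwa [Complex.deriv_exp, norm_exp, Real.exp_le_one_iff]) (by simp) hz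
  simpa using h

lemma norm_exp_neg_mul_sub_one_le {r : ℂ} (hr : 0 ≤ r.re) {t : ℝ} (ht : 0 ≤ t) :
    ‖exp (-(r * t)) - 1‖ ≤ (2 + ‖r‖) * min 1 t := by
  have hre : (-(r * t)).re ≤ 0 := by simpa using mul_nonneg hr ht
  refine le_add_mul_min_one zero_le_two (norm_nonneg r) ht ?_ ?_
  · calc ‖exp (-(r * t)) - 1‖ ≤ ‖exp (-(r * t))‖ + ‖(1 : ℂ)‖ := norm_sub_le _ _
      _ ≤ 1 + 1 := by rw [norm_exp, norm_one]; gcongr; exact Real.exp_le_one_iff.2 hre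
      _ = 2 := one_add_one_eq_two
  · simpa [abs_of_nonneg ht] using norm_exp_sub_one_le_of_re_nonpos hre

lemma norm_exp_neg_mul_sub_one_div_le (α : ℝ) {r : ℂ} (hr : 0 ≤ r.re) {t : ℝ} (ht : 0 < t) :
    ‖(exp (-(r * t)) - 1) / ((t ^ (1 + α) : ℝ) : ℂ)‖ ≤
      (2 + ‖r‖) * (min 1 t / t ^ (1 + α)) := by
  have hpos : 0 < t ^ (1 + α) := Real.rpow_pos_of_pos ht _
  rw [norm_div, norm_real, Real.norm_of_nonneg hpos.le, ← mul_div_assoc]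
  gcongr
  exact norm_exp_neg_mul_sub_one_le hr ht.le

end Kernel

section Laplace

lemma integrableOn_rpow_mul_exp_neg_mul {a b : ℝ} (ha : 0 < a) (hb : 0 < b) :
    IntegrableOn (fun t : ℝ ↦ t ^ (a - 1) * Real.exp (-(b * t))) (Ioi 0) := by
  simpa using integrableOn_rpow_mul_exp_neg_mul_rpow (p := 1) (s := a - 1) (by linarith)
    one_pos hb

lemma norm_cpow_mul_exp_neg_mul (a r : ℂ) {t : ℝ} (ht : 0 < t) :
    ‖(t : ℂ) ^ (a - 1) * exp (-(r * t))‖ = t ^ (a.re - 1) * Real.exp (-(r.re * t)) := by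
  rw [norm_mul, norm_exp, norm_cpow_eq_rpow_re_of_pos ht]
  simp

lemma aestronglyMeasurable_cpow_mul_exp_neg_mul (a r : ℂ) :
    AEStronglyMeasurable (fun t : ℝ ↦ (t : ℂ) ^ (a - 1) * exp (-(r * t)))
      (volume.restrict (Ioi 0)) :=
  Measurable.aestronglyMeasurable (by fun_prop)

lemma integrableOn_cpow_mul_exp_neg_mul {a r : ℂ} (ha : 0 < a.re) (hr : 0 < r.re) :
    IntegrableOn (fun t : ℝ ↦ (t : ℂ) ^ (a - 1) * exp (-(r * t))) (Ioi 0) :=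
  (integrableOn_rpow_mul_exp_neg_mul ha hr).mono'
    (aestronglyMeasurable_cpow_mul_exp_neg_mul a r) <|
    (ae_restrict_iff' measurableSet_Ioi).2 <|
      .of_forall fun _ ht ↦ (norm_cpow_mul_exp_neg_mul a r ht).le

lemma differentiableAt_integral_cpow_mul_exp_neg_mul {a r : ℂ} (ha : 0 < a.re) (hr : 0 < r.re) :
    DifferentiableAt ℂ (fun z : ℂ ↦ ∫ t in Ioi (0 : ℝ), (t : ℂ) ^ (a - 1) * exp (-(z * t))) r := by
  have hnhds : {z : ℂ | r.re / 2 < z.re} ∈ 𝓝 r :=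
    (isOpen_lt continuous_const continuous_re).mem_nhds (half_lt_self hr)
  refine (hasDerivAt_integral_of_dominated_loc_of_deriv_le
    (F' := fun z (t : ℝ) ↦ -((t : ℂ) ^ (a + 1 - 1) * exp (-(z * t))))
    (bound := fun t ↦ t ^ ((a + 1).re - 1) * Real.exp (-(r.re / 2 * t))) hnhds
    (.of_forall (aestronglyMeasurable_cpow_mul_exp_neg_mul a))
    (integrableOn_cpow_mul_exp_neg_mul ha hr)
    (aestronglyMeasurable_cpow_mul_exp_neg_mul (a + 1) r).neg ?_
    (integrableOn_rpow_mul_exp_neg_mul (by simpa using by linarith) (half_pos hr))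
    ?_).2.differentiableAt
  · refine (ae_restrict_iff' measurableSet_Ioi).2 (.of_forall fun t (ht : 0 < t) z hz ↦ ?_)
    rw [norm_neg, norm_cpow_mul_exp_neg_mul _ _ ht]
    gcongr
    exact le_of_lt hz
  · refine (ae_restrict_iff' measurableSet_Ioi).2 (.of_forall fun t (ht : 0 < t) z _ ↦ ?_)
    have hpow : (t : ℂ) ^ (a + 1 - 1) = (t : ℂ) ^ (a - 1) * t := by
      rw [add_sub_right_comm, cpow_add _ _ (ofReal_ne_zero.2 ht.ne'), cpow_one]
    refine (((hasDerivAt_mul_const (t : ℂ)).fun_neg.cexp).const_mul _).congr_deriv ?_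
    rw [hpow]
    ring

lemma tendsto_ofReal_nhdsGT (x : ℝ) : Tendsto ((↑) : ℝ → ℂ) (𝓝[>] x) (𝓝[≠] (x : ℂ)) := by
  refine tendsto_nhdsWithin_iff.2
    ⟨continuous_ofReal.continuousAt.mono_left nhdsWithin_le_nhds, ?_⟩
  filter_upwards [self_mem_nhdsWithin] with y (hy : x < y)
  exact fun h ↦ hy.ne' (ofReal_injective h)

-- The two sides are holomorphic in `r` and agree on the positive reals.
lemma integral_cpow_mul_exp_neg_mul_Ioi_of_re_pos {a r : ℂ} (ha : 0 < a.re) (hr : 0 < r.re) :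
    ∫ t in Ioi (0 : ℝ), (t : ℂ) ^ (a - 1) * exp (-(r * t)) = Gamma a * r ^ (-a) := by
  have hopen : IsOpen {z : ℂ | 0 < z.re} := isOpen_lt continuous_const continuous_re
  have hlhs : AnalyticOnNhd ℂ (fun z : ℂ ↦ ∫ t in Ioi (0 : ℝ), (t : ℂ) ^ (a - 1) *
      exp (-(z * t))) {z | 0 < z.re} :=
    DifferentiableOn.analyticOnNhd (fun z hz ↦
      (differentiableAt_integral_cpow_mul_exp_neg_mul ha hz).differentiableWithinAt) hopen
  have hrhs : AnalyticOnNhd ℂ (fun z : ℂ ↦ Gamma a * z ^ (-a)) {z | 0 < z.re} :=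
    DifferentiableOn.analyticOnNhd (fun z hz ↦ ((differentiableAt_id.cpow_const
      (Or.inl hz)).const_mul (Gamma a)).differentiableWithinAt) hopen
  have hreal : ∀ x : ℝ, 0 < x →
      ∫ t in Ioi (0 : ℝ), (t : ℂ) ^ (a - 1) * exp (-(x * t)) = Gamma a * (x : ℂ) ^ (-a) := by
    intro x hx
    rw [integral_cpow_mul_exp_neg_mul_Ioi ha hx, one_div, inv_cpow _ _ ?_, cpow_neg, mul_comm]
    rw [arg_ofReal_of_nonneg hx.le]
    exact Real.pi_pos.ne
  have hfreq : ∃ᶠ z in 𝓝[≠] (1 : ℂ),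
      ∫ t in Ioi (0 : ℝ), (t : ℂ) ^ (a - 1) * exp (-(z * t)) = Gamma a * z ^ (-a) := by
    rw [← ofReal_one]
    refine (tendsto_ofReal_nhdsGT 1).frequently (Eventually.frequently ?_)
    filter_upwards [self_mem_nhdsWithin] with x (hx : 1 < x)
    exact hreal x (by linarith)
  exact hlhs.eqOn_of_preconnected_of_frequently_eq hrhs
    (convex_halfSpace_re_gt 0).isPreconnected (by simp) hfreq hr

end Laplace

section Symbol

/-- The multiplier `∫₀^∞ (e^{-rt} - 1) t^{-1-α} dt` by which the unnormalised Marchaud integral of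
order `α` acts on the exponential `x ↦ e^{-rx}`. -/
noncomputable def marchaudSymbol (α : ℝ) (r : ℂ) : ℂ :=
  ∫ t in Ioi (0 : ℝ), (exp (-(r * t)) - 1) / ((t ^ (1 + α) : ℝ) : ℂ)

variable {α : ℝ}

lemma aestronglyMeasurable_exp_neg_mul_sub_one_div (α : ℝ) (r : ℂ) :
    AEStronglyMeasurable (fun t : ℝ ↦ (exp (-(r * t)) - 1) / ((t ^ (1 + α) : ℝ) : ℂ))
      (volume.restrict (Ioi 0)) :=
  Measurable.aestronglyMeasurable (by fun_prop)

lemma integrableOn_exp_neg_mul_sub_one_div (hα : α ∈ Ioo (0 : ℝ) 1) {r : ℂ} (hr : 0 ≤ r.re) :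
    IntegrableOn (fun t : ℝ ↦ (exp (-(r * t)) - 1) / ((t ^ (1 + α) : ℝ) : ℂ)) (Ioi 0) :=
  ((integrableOn_min_one_div_rpow hα).const_mul (2 + ‖r‖)).mono'
    (aestronglyMeasurable_exp_neg_mul_sub_one_div α r) <|
    (ae_restrict_iff' measurableSet_Ioi).2 <|
      .of_forall fun _ ht ↦ norm_exp_neg_mul_sub_one_div_le α hr ht

lemma continuousOn_marchaudSymbol (hα : α ∈ Ioo (0 : ℝ) 1) :
    ContinuousOn (marchaudSymbol α) {r | 0 ≤ r.re} := by
  intro r _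
  have hnorm : ∀ᶠ z in 𝓝[{r | 0 ≤ r.re}] r, ‖z‖ < ‖r‖ + 1 :=
    (continuous_norm.continuousAt.eventually_lt_const (lt_add_one _)).filter_mono
      nhdsWithin_le_nhds
  refine continuousWithinAt_of_dominated
    (.of_forall (aestronglyMeasurable_exp_neg_mul_sub_one_div α)) ?_
    ((integrableOn_min_one_div_rpow hα).const_mul (2 + (‖r‖ + 1)))
    (.of_forall fun t ↦ Continuous.continuousWithinAt (by fun_prop))
  filter_upwards [hnorm, self_mem_nhdsWithin] with z hz hre
  refine (ae_restrict_iff' measurableSet_Ioi).2 (.of_forall fun t (ht : 0 < t) ↦ ?_)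
  refine (norm_exp_neg_mul_sub_one_div_le α hre ht).trans ?_
  gcongr

lemma tendsto_rpow_neg_mul_min_one_zero (hα : α ∈ Ioo (0 : ℝ) 1) :
    Tendsto (fun t : ℝ ↦ t ^ (-α) * min 1 t) (𝓝[>] 0) (𝓝 0) := by
  have h : Tendsto (fun t : ℝ ↦ t ^ (1 - α)) (𝓝[>] 0) (𝓝 0) := by
    have hpos : 0 < 1 - α := by linarith [hα.2]
    simpa [Real.zero_rpow hpos.ne'] using
      ((Real.continuousAt_rpow_const 0 _ (Or.inr hpos.le)).tendsto).mono_left nhdsWithin_le_nhds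
  refine h.congr' ?_
  filter_upwards [Ioo_mem_nhdsGT one_pos] with t ht
  rw [min_eq_right ht.2.le, sub_eq_neg_add, Real.rpow_add_one ht.1.ne']

lemma tendsto_rpow_neg_mul_min_one_atTop (hα : 0 < α) :
    Tendsto (fun t : ℝ ↦ t ^ (-α) * min 1 t) atTop (𝓝 0) := by
  refine (tendsto_rpow_neg_atTop hα).congr' ?_
  filter_upwards [eventually_ge_atTop 1] with t ht
  rw [min_eq_left ht, mul_one]

lemma hasDerivAt_neg_rpow_neg_div (hα : α ≠ 0) {t : ℝ} (ht : 0 < t) :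
    HasDerivAt (fun t : ℝ ↦ ((-(t ^ (-α)) / α : ℝ) : ℂ)) (((t ^ (1 + α) : ℝ) : ℂ)⁻¹) t := by
  have h : HasDerivAt (fun t : ℝ ↦ -(t ^ (-α)) / α) ((t ^ (1 + α))⁻¹) t := by
    refine ((Real.hasDerivAt_rpow_const (p := -α) (Or.inl ht.ne')).fun_neg.div_const α).congr_deriv
      ?_
    rw [← Real.rpow_neg ht.le, neg_add_rev, ← sub_eq_add_neg]
    field_simp
  simpa only [ofReal_inv] using h.ofReal_comp

lemma norm_exp_neg_mul_sub_one_mul_rpow_le (hα : 0 < α) {r : ℂ} (hr : 0 ≤ r.re) {t : ℝ}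
    (ht : 0 < t) :
    ‖(exp (-(r * t)) - 1) * ((-(t ^ (-α)) / α : ℝ) : ℂ)‖ ≤
      (2 + ‖r‖) / α * (t ^ (-α) * min 1 t) := by
  have hpos : 0 < t ^ (-α) := Real.rpow_pos_of_pos ht _
  calc ‖(exp (-(r * t)) - 1) * ((-(t ^ (-α)) / α : ℝ) : ℂ)‖
      = ‖exp (-(r * t)) - 1‖ * (t ^ (-α) / α) := by
        rw [norm_mul, norm_real, norm_div, norm_neg, Real.norm_of_nonneg hpos.le,
          Real.norm_of_nonneg hα.le]
    _ ≤ (2 + ‖r‖) * min 1 t * (t ^ (-α) / α) := by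
        gcongr
        exact norm_exp_neg_mul_sub_one_le hr ht.le
    _ = (2 + ‖r‖) / α * (t ^ (-α) * min 1 t) := by ring

-- Integrate by parts, with antiderivative `-t ^ (-α) / α` of the kernel.
lemma marchaudSymbol_eq_integral (hα : α ∈ Ioo (0 : ℝ) 1) {r : ℂ} (hr : 0 < r.re) :
    marchaudSymbol α r =
      -(r / α) * ∫ t in Ioi (0 : ℝ), (t : ℂ) ^ ((1 - α : ℂ) - 1) * exp (-(r * t)) := by
  set u : ℝ → ℂ := fun t ↦ exp (-(r * t)) - 1
  set v : ℝ → ℂ := fun t ↦ ((-(t ^ (-α)) / α : ℝ) : ℂ)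
  have hu : ∀ t ∈ Ioi (0 : ℝ), HasDerivAt u (-r * exp (-(r * t))) t := fun t _ ↦ by
    have h := ((hasDerivAt_const_mul (x := (t : ℂ)) r).fun_neg.cexp.sub_const 1).comp_ofReal
    exact h.congr_deriv (mul_comm _ _)
  have hv : ∀ t ∈ Ioi (0 : ℝ), HasDerivAt v (((t ^ (1 + α) : ℝ) : ℂ)⁻¹) t :=
    fun t ht ↦ hasDerivAt_neg_rpow_neg_div hα.1.ne' ht
  have huv : ∀ t ∈ Ioi (0 : ℝ), ‖(u * v) t‖ ≤ (2 + ‖r‖) / α * (t ^ (-α) * min 1 t) :=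
    fun t ht ↦ norm_exp_neg_mul_sub_one_mul_rpow_le hα.1 hr.le ht
  have hzero : Tendsto (u * v) (𝓝[>] 0) (𝓝 0) :=
    squeeze_zero_norm' (eventually_of_mem self_mem_nhdsWithin huv) <| by
      simpa using (tendsto_rpow_neg_mul_min_one_zero hα).const_mul ((2 + ‖r‖) / α)
  have hinfty : Tendsto (u * v) atTop (𝓝 0) :=
    squeeze_zero_norm' (eventually_of_mem (Ioi_mem_atTop 0) huv) <| by
      simpa using (tendsto_rpow_neg_mul_min_one_atTop hα.1).const_mul ((2 + ‖r‖) / α)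
  have hu'v : ∀ t ∈ Ioi (0 : ℝ), r / α * ((t : ℂ) ^ ((1 - α : ℂ) - 1) * exp (-(r * t))) =
      -r * exp (-(r * t)) * v t := fun t (ht : 0 < t) ↦ by
    rw [sub_sub_cancel_left, ← ofReal_neg, ← ofReal_cpow ht.le]
    simp only [v]
    push_cast
    ring
  have hint := (integrableOn_cpow_mul_exp_neg_mul (a := 1 - α) (by simpa using hα.2) hr).const_mul
    (r / α)
  calc marchaudSymbol α r = ∫ t in Ioi (0 : ℝ), u t * ((t ^ (1 + α) : ℝ) : ℂ)⁻¹ := rfl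
    _ = 0 - 0 - ∫ t in Ioi (0 : ℝ), -r * exp (-(r * t)) * v t :=
        integral_Ioi_mul_deriv_eq_deriv_mul hu hv
          (integrableOn_exp_neg_mul_sub_one_div hα hr.le)
          (IntegrableOn.congr_fun hint hu'v measurableSet_Ioi) hzero hinfty
    _ = -(r / α) * ∫ t in Ioi (0 : ℝ), (t : ℂ) ^ ((1 - α : ℂ) - 1) * exp (-(r * t)) := by
        rw [← setIntegral_congr_fun measurableSet_Ioi hu'v, integral_const_mul]
        ring

lemma marchaudSymbol_eq (hα : α ∈ Ioo (0 : ℝ) 1) {r : ℂ} (hr : 0 ≤ r.re) :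
    marchaudSymbol α r = -((Real.Gamma (1 - α) / α : ℝ) : ℂ) * r ^ (α : ℂ) := by
  have hopen : EqOn (marchaudSymbol α) (fun r ↦ -((Real.Gamma (1 - α) / α : ℝ) : ℂ) * r ^ (α : ℂ))
      {r | 0 < r.re} := fun r (hr : 0 < r.re) ↦ by
    have hr0 : r ≠ 0 := fun h ↦ by simp [h] at hr
    have hpow : r * r ^ (-(1 - α) : ℂ) = r ^ (α : ℂ) := by
      rw [neg_sub, cpow_sub _ _ hr0, cpow_one, mul_div_cancel₀ _ hr0]
    rw [marchaudSymbol_eq_integral hα hr, integral_cpow_mul_exp_neg_mul_Ioi_of_re_pos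
      (by simpa using hα.2) hr]
    push_cast [← Complex.Gamma_ofReal]
    rw [← hpow]
    ring
  have hcont : ContinuousOn (fun r : ℂ ↦ -((Real.Gamma (1 - α) / α : ℝ) : ℂ) * r ^ (α : ℂ))
      {r | 0 ≤ r.re} := fun r hr ↦ by
    have hpow : ContinuousAt (fun r : ℂ ↦ r ^ (α : ℂ)) r :=
      ContinuousAt.comp (g := fun p : ℂ × ℂ ↦ p.1 ^ p.2) (f := fun z ↦ (z, (α : ℂ)))
        (continuousAt_cpow_of_re_pos (Or.inl hr) hα.1) (by fun_prop)
    exact (hpow.const_mul _).continuousWithinAt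
  exact hopen.of_subset_closure (continuousOn_marchaudSymbol hα) hcont
    (fun z (hz : 0 < z.re) ↦ hz.le) (closure_setOfPred_lt_re 0).ge hr

lemma I_mul_cpow {k : ℝ} (hk : k ≠ 0) (α : ℝ) :
    (I * k) ^ (α : ℂ) =
      ((|k| ^ α : ℝ) : ℂ) * exp (I * ((Real.sign k * (α * π / 2) : ℝ) : ℂ)) := by
  have hne : I * (k : ℂ) ≠ 0 := mul_ne_zero I_ne_zero (ofReal_ne_zero.2 hk)
  have harg : (I * (k : ℂ)).arg = Real.sign k * (π / 2) := by
    rcases hk.lt_or_gt with h | h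
    · rw [Real.sign_of_neg h, show I * (k : ℂ) = ((-k : ℝ) : ℂ) * -I by push_cast; ring,
        arg_real_mul _ (neg_pos.2 h), arg_neg_I]
      ring
    · rw [Real.sign_of_pos h, mul_comm, arg_real_mul _ h, arg_I, one_mul]
  rw [cpow_def_of_ne_zero hne, Complex.log, harg, norm_mul, norm_I, one_mul, norm_real,
    Real.norm_eq_abs, Real.rpow_def_of_pos (abs_pos.2 hk), ofReal_exp, ← exp_add]
  congr 1
  push_cast
  ring

lemma sin_add_mul_exp_add_sin_sub_mul_exp (a b : ℂ) :
    sin (a + b) * exp (I * a) + sin (a - b) * exp (I * -a) = sin (2 * a) * exp (I * b) := by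
  simp only [mul_comm I, exp_mul_I, sin_add, sin_sub, sin_two_mul, sin_neg, cos_neg]
  ring

lemma sin_add_mul_exp_sign_add_sin_sub_mul_exp_sign (a b : ℝ) {k : ℝ} (hk : k ≠ 0) :
    ((Real.sin (a + b) : ℝ) : ℂ) * exp (I * ((Real.sign k * a : ℝ) : ℂ)) +
        ((Real.sin (a - b) : ℝ) : ℂ) * exp (I * ((Real.sign (-k) * a : ℝ) : ℂ)) =
      ((Real.sin (2 * a) : ℝ) : ℂ) * exp (I * ((Real.sign k * b : ℝ) : ℂ)) := by
  rcases hk.lt_or_gt with h | h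
  · rw [Real.sign_of_neg h, Real.sign_of_pos (neg_pos.2 h)]
    simpa [add_comm, ← sub_eq_add_neg] using sin_add_mul_exp_add_sin_sub_mul_exp a (-b)
  · rw [Real.sign_of_pos h, Real.sign_of_neg (neg_neg_iff_pos.2 h)]
    simpa using sin_add_mul_exp_add_sin_sub_mul_exp a b

lemma Gamma_one_add_mul_Gamma_one_sub_mul_sin (hα : α ∈ Ioo (0 : ℝ) 1) :
    Real.Gamma (1 + α) / π * (Real.Gamma (1 - α) / α) * Real.sin (π * α) = 1 := by
  have hsin : Real.sin (π * α) ≠ 0 :=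
    (Real.sin_pos_of_pos_of_lt_pi (mul_pos Real.pi_pos hα.1)
      (mul_lt_of_lt_one_right Real.pi_pos hα.2)).ne'
  have hα0 : α ≠ 0 := hα.1.ne'
  calc Real.Gamma (1 + α) / π * (Real.Gamma (1 - α) / α) * Real.sin (π * α)
      = Real.Gamma α * Real.Gamma (1 - α) * Real.sin (π * α) / π := by
        rw [add_comm, Real.Gamma_add_one hα0]
        field_simp
    _ = 1 := by
        rw [Real.Gamma_mul_Gamma_one_sub, div_mul_cancel₀ _ hsin, div_self Real.pi_ne_zero]

lemma rieszFeller_symbol_eq (hα : α ∈ Ioo (0 : ℝ) 1) (θ k : ℝ) :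
    ((Real.Gamma (1 + α) / π : ℝ) : ℂ) *
        (((Real.sin ((α + θ) * π / 2) : ℝ) : ℂ) * marchaudSymbol α (I * k) +
          ((Real.sin ((α - θ) * π / 2) : ℝ) : ℂ) * marchaudSymbol α (I * (-k : ℝ))) =
      -(((|k| ^ α : ℝ) : ℂ) * exp (I * ((Real.sign k * θ * π / 2 : ℝ) : ℂ))) := by
  rcases eq_or_ne k 0 with rfl | hk
  · simp [marchaudSymbol, Real.zero_rpow hα.1.ne']
  have htrig := sin_add_mul_exp_sign_add_sin_sub_mul_exp_sign (α * π / 2) (θ * π / 2) hk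
  have hgamma : ((Real.Gamma (1 + α) / π : ℝ) : ℂ) * ((Real.Gamma (1 - α) / α : ℝ) : ℂ) *
      ((Real.sin (2 * (α * π / 2)) : ℝ) : ℂ) = 1 := by
    rw [show 2 * (α * π / 2) = π * α by ring]
    exact_mod_cast Gamma_one_add_mul_Gamma_one_sub_mul_sin hα
  rw [marchaudSymbol_eq hα (by simp), marchaudSymbol_eq hα (by simp), I_mul_cpow hk,
    I_mul_cpow (neg_ne_zero.2 hk), abs_neg,
    show (α + θ) * π / 2 = α * π / 2 + θ * π / 2 by ring,
    show (α - θ) * π / 2 = α * π / 2 - θ * π / 2 by ring,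
    show Real.sign k * θ * π / 2 = Real.sign k * (θ * π / 2) by ring]
  linear_combination (-((Real.Gamma (1 + α) / π : ℝ) : ℂ) *
    ((Real.Gamma (1 - α) / α : ℝ) : ℂ) * ((|k| ^ α : ℝ) : ℂ)) * htrig -
    ((|k| ^ α : ℝ) : ℂ) * exp (I * ((Real.sign k * (θ * π / 2) : ℝ) : ℂ)) * hgamma

end Symbol

section Increments

variable {E : Type*} [NormedAddCommGroup E]

lemma integral_norm_comp_add_sub_le_two_mul {f : ℝ → E} (hf : Integrable f) (h : ℝ) :
    ∫ x, ‖f (x + h) - f x‖ ≤ 2 * ∫ x, ‖f x‖ := by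
  have hfh : Integrable (fun x ↦ f (x + h)) := hf.comp_add_right h
  calc ∫ x, ‖f (x + h) - f x‖ ≤ ∫ x, (‖f (x + h)‖ + ‖f x‖) :=
        integral_mono (hfh.sub hf).norm (hfh.norm.add hf.norm) fun _ ↦ norm_sub_le _ _
    _ = 2 * ∫ x, ‖f x‖ := by
        rw [integral_add hfh.norm hf.norm, integral_add_right_eq_self (fun x ↦ ‖f x‖), two_mul]

variable [NormedSpace ℝ E] [CompleteSpace E]

lemma lintegral_enorm_comp_add_sub_le {f : ℝ → E} (hf : Differentiable ℝ f)
    (hf' : Integrable (deriv f)) (h : ℝ) :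
    ∫⁻ x, ‖f (x + h) - f x‖ₑ ≤ ‖h‖ₑ * ∫⁻ x, ‖deriv f x‖ₑ := by
  have hftc : ∀ x, ‖f (x + h) - f x‖ₑ ≤ ∫⁻ s in uIoc 0 h, ‖deriv f (x + s)‖ₑ := fun x ↦ by
    have hint : ∫ s in 0..h, deriv f (x + s) = f (x + h) - f x := by
      rw [intervalIntegral.integral_comp_add_left, add_zero,
        intervalIntegral.integral_deriv_eq_sub (fun y _ ↦ hf y) hf'.intervalIntegrable]
    rw [← hint, ← enorm_norm, intervalIntegral.norm_intervalIntegral_eq, enorm_norm]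
    exact enorm_integral_le_lintegral_enorm _
  calc ∫⁻ x, ‖f (x + h) - f x‖ₑ
      ≤ ∫⁻ x, ∫⁻ s in uIoc 0 h, ‖deriv f (x + s)‖ₑ := lintegral_mono hftc
    _ = ∫⁻ s in uIoc 0 h, ∫⁻ x, ‖deriv f (x + s)‖ₑ :=
        lintegral_lintegral_swap
          ((stronglyMeasurable_deriv f).enorm.comp measurable_add).aemeasurable
    _ = ‖h‖ₑ * ∫⁻ x, ‖deriv f x‖ₑ := by
        simp only [lintegral_add_right_eq_self (fun x ↦ ‖deriv f x‖ₑ), setLIntegral_const,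
          Real.volume_uIoc, sub_zero, Real.enorm_eq_ofReal_abs, mul_comm]

lemma integral_norm_comp_add_sub_le {f : ℝ → E} (hf : Differentiable ℝ f)
    (hf' : Integrable (deriv f)) (h : ℝ) :
    ∫ x, ‖f (x + h) - f x‖ ≤ |h| * ∫ x, ‖deriv f x‖ := by
  have hcont : Continuous f := hf.continuous
  rw [integral_norm_eq_lintegral_enorm
      (Continuous.aestronglyMeasurable (by fun_prop)),
    integral_norm_eq_lintegral_enorm hf'.aestronglyMeasurable, ← Real.norm_eq_abs,
    ← toReal_enorm, ← ENNReal.toReal_mul]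
  exact ENNReal.toReal_mono (ENNReal.mul_ne_top enorm_ne_top hf'.2.ne)
    (lintegral_enorm_comp_add_sub_le hf hf' h)

lemma integral_norm_comp_add_mul_sub_le {f : ℝ → E} (hf : Differentiable ℝ f)
    (hfi : Integrable f) (hf' : Integrable (deriv f)) (s : ℝ) {t : ℝ} (ht : 0 ≤ t) :
    ∫ x, ‖f (x + s * t) - f x‖ ≤
      (2 * (∫ x, ‖f x‖) + |s| * ∫ x, ‖deriv f x‖) * min 1 t := by
  refine le_add_mul_min_one (by positivity) (by positivity) ht
    (integral_norm_comp_add_sub_le_two_mul hfi _) ?_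
  calc ∫ x, ‖f (x + s * t) - f x‖ ≤ |s * t| * ∫ x, ‖deriv f x‖ :=
        integral_norm_comp_add_sub_le hf hf' _
    _ = |s| * (∫ x, ‖deriv f x‖) * t := by rw [abs_mul, abs_of_nonneg ht]; ring

end Increments

section Marchaud

/-- The unnormalised Marchaud fractional derivative of order `α`, as a function of the base point
`x`: the increments of `f` from `x` in the direction `s` are integrated against `t ^ (-1 - α)`. The
values `s = 1` and `s = -1` give the two one-sided integrals. -/
noncomputable def marchaudIntegral (α s : ℝ) (f : ℝ → ℂ) (x : ℝ) : ℂ :=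
  ∫ t in Ioi (0 : ℝ), (f (x + s * t) - f x) / ((t ^ (1 + α) : ℝ) : ℂ)

variable {α s : ℝ} {f : ℝ → ℂ}

-- Near `0` the integrand is `t ^ (-α)` times a continuous difference quotient.
lemma integrableOn_Ioc_comp_add_mul_sub_div (hα : α < 1) (hf : Continuous f) {x : ℝ}
    (hfx : DifferentiableAt ℝ f x) :
    IntegrableOn (fun t : ℝ ↦ (f (x + s * t) - f x) / ((t ^ (1 + α) : ℝ) : ℂ)) (Ioc 0 1) := by
  have hpow : IntegrableOn (fun t : ℝ ↦ ((t ^ (-α) : ℝ) : ℂ)) (Icc 0 1) := by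
    rw [integrableOn_Icc_iff_integrableOn_Ioc]
    exact ((intervalIntegrable_iff_integrableOn_Ioc_of_le zero_le_one).1
      (intervalIntegral.intervalIntegrable_rpow' (by linarith))).ofReal
  have hslope : Continuous (dslope f x) := continuousOn_univ.1 <|
    (continuousOn_dslope Filter.univ_mem).2 ⟨hf.continuousOn, hfx⟩
  refine ((hpow.mul_continuousOn (g' := fun t ↦ s • dslope f x (x + s * t))
    (by fun_prop) isCompact_Icc).mono_set Ioc_subset_Icc_self).congr_fun (fun t ht ↦ ?_)
    measurableSet_Ioc
  have hincr : f (x + s * t) - f x = (s * t) • dslope f x (x + s * t) := by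
    simpa using (sub_smul_dslope f x (x + s * t)).symm
  have ht0 : (t : ℂ) ≠ 0 := ofReal_ne_zero.2 ht.1.ne'
  dsimp only
  rw [hincr, Real.rpow_add ht.1, Real.rpow_one, Real.rpow_neg ht.1.le]
  simp only [real_smul, ofReal_mul, ofReal_inv]
  field_simp

lemma integrableOn_Ioi_comp_add_mul_sub_div (hα : 0 < α) (hs : s ≠ 0) (hf : Integrable f) (x : ℝ) :
    IntegrableOn (fun t : ℝ ↦ (f (x + s * t) - f x) / ((t ^ (1 + α) : ℝ) : ℂ)) (Ioi 1) := by
  have hpow : IntegrableOn (fun t : ℝ ↦ ((t ^ (-(1 + α)) : ℝ) : ℂ)) (Ioi 1) :=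
    (integrableOn_Ioi_rpow_of_lt (by linarith) zero_lt_one).ofReal
  have hline : Integrable fun t ↦ f (x + s * t) :=
    (hf.comp_add_left x).comp_mul_left' hs
  have hmul : IntegrableOn (fun t : ℝ ↦ ((t ^ (-(1 + α)) : ℝ) : ℂ) * f (x + s * t)) (Ioi 1) := by
    refine hline.integrableOn.bdd_mul (c := 1) (Measurable.aestronglyMeasurable (by fun_prop)) <|
      (ae_restrict_iff' measurableSet_Ioi).2 (.of_forall fun t (ht : 1 < t) ↦ ?_)
    rw [norm_real, Real.norm_of_nonneg (by positivity)]
    exact Real.rpow_le_one_of_one_le_of_nonpos ht.le (by linarith)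
  refine (hmul.sub (hpow.mul_const (f x))).congr_fun (fun t (ht : 1 < t) ↦ ?_) measurableSet_Ioi
  simp only [Pi.sub_apply]
  rw [Real.rpow_neg (by linarith), ofReal_inv]
  ring

lemma integrableOn_comp_add_mul_sub_div (hα : α ∈ Ioo (0 : ℝ) 1) (hs : s ≠ 0)
    (hf : Continuous f) (hfi : Integrable f) {x : ℝ} (hfx : DifferentiableAt ℝ f x) :
    IntegrableOn (fun t : ℝ ↦ (f (x + s * t) - f x) / ((t ^ (1 + α) : ℝ) : ℂ)) (Ioi 0) := by
  rw [← Ioc_union_Ioi_eq_Ioi zero_le_one]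
  exact (integrableOn_Ioc_comp_add_mul_sub_div hα.2 hf hfx).union
    (integrableOn_Ioi_comp_add_mul_sub_div hα.1 hs hfi x)

lemma integrable_prod_comp_add_mul_sub_div (hα : α ∈ Ioo (0 : ℝ) 1) (hf : Differentiable ℝ f)
    (hfi : Integrable f) (hf' : Integrable (deriv f)) (s : ℝ) :
    Integrable (fun p : ℝ × ℝ ↦ (f (p.1 + s * p.2) - f p.1) / ((p.2 ^ (1 + α) : ℝ) : ℂ))
      (volume.prod (volume.restrict (Ioi 0))) := by
  have hmeas : StronglyMeasurable
      (fun p : ℝ × ℝ ↦ (f (p.1 + s * p.2) - f p.1) / ((p.2 ^ (1 + α) : ℝ) : ℂ)) := by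
    have hfm : Measurable f := hf.continuous.measurable
    exact Measurable.stronglyMeasurable (by fun_prop)
  have hslice : ∀ t : ℝ, Integrable fun x ↦ (f (x + s * t) - f x) / ((t ^ (1 + α) : ℝ) : ℂ) :=
    fun t ↦ ((hfi.comp_add_right (s * t)).sub hfi).div_const _
  have hnorm : ∀ t ∈ Ioi (0 : ℝ), ‖∫ x, ‖(f (x + s * t) - f x) / ((t ^ (1 + α) : ℝ) : ℂ)‖‖ ≤
      (2 * (∫ x, ‖f x‖) + |s| * ∫ x, ‖deriv f x‖) * (min 1 t / t ^ (1 + α)) :=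
    fun t (ht : 0 < t) ↦ by
      have hpos : 0 < t ^ (1 + α) := Real.rpow_pos_of_pos ht _
      rw [Real.norm_of_nonneg (integral_nonneg fun _ ↦ norm_nonneg _)]
      simp only [norm_div, norm_real, Real.norm_of_nonneg hpos.le, integral_div]
      rw [← mul_div_assoc]
      gcongr
      exact integral_norm_comp_add_mul_sub_le hf hfi hf' s ht.le
  exact (integrable_prod_iff' hmeas.aestronglyMeasurable).2 ⟨.of_forall hslice,
    ((integrableOn_min_one_div_rpow hα).const_mul _).mono'
      hmeas.norm.integral_prod_left'.aestronglyMeasurable <|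
      (ae_restrict_iff' measurableSet_Ioi).2 (.of_forall hnorm)⟩

end Marchaud

section Fourier

/-- The Fourier transform `f*(k) = ∫ e^{ikx} f(x) dx`, in the convention without `2π` and with a
positive sign in the exponent. -/
noncomputable def fourierStar (f : ℝ → ℂ) (k : ℝ) : ℂ :=
  ∫ x : ℝ, exp (I * ((k * x : ℝ) : ℂ)) * f x

variable {α s : ℝ} {f g : ℝ → ℂ}

lemma integrable_exp_I_mul (hf : Integrable f) (k : ℝ) :
    Integrable fun x : ℝ ↦ exp (I * ((k * x : ℝ) : ℂ)) * f x :=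
  hf.bdd_mul (c := 1) (Continuous.aestronglyMeasurable (by fun_prop))
    (.of_forall fun _ ↦ (norm_exp_I_mul_ofReal _).le)

lemma fourierStar_add (hf : Integrable f) (hg : Integrable g) (k : ℝ) :
    fourierStar (fun x ↦ f x + g x) k = fourierStar f k + fourierStar g k := by
  simp only [fourierStar, mul_add]
  exact integral_add (integrable_exp_I_mul hf k) (integrable_exp_I_mul hg k)

lemma fourierStar_sub (hf : Integrable f) (hg : Integrable g) (k : ℝ) :
    fourierStar (fun x ↦ f x - g x) k = fourierStar f k - fourierStar g k := by
  simp only [fourierStar, mul_sub]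
  exact integral_sub (integrable_exp_I_mul hf k) (integrable_exp_I_mul hg k)

lemma fourierStar_const_mul (c : ℂ) (f : ℝ → ℂ) (k : ℝ) :
    fourierStar (fun x ↦ c * f x) k = c * fourierStar f k := by
  simp only [fourierStar, mul_left_comm _ c, integral_const_mul]

lemma fourierStar_div_const (f : ℝ → ℂ) (c : ℂ) (k : ℝ) :
    fourierStar (fun x ↦ f x / c) k = fourierStar f k / c := by
  simp only [fourierStar, ← mul_div_assoc, integral_div]

lemma fourierStar_comp_add (f : ℝ → ℂ) (h k : ℝ) :
    fourierStar (fun x ↦ f (x + h)) k = exp (-(I * ((k * h : ℝ) : ℂ))) * fourierStar f k := by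
  have hshift : ∀ x : ℝ, exp (I * ((k * x : ℝ) : ℂ)) * f (x + h) =
      exp (-(I * ((k * h : ℝ) : ℂ))) * (exp (I * ((k * (x + h) : ℝ) : ℂ)) * f (x + h)) :=
    fun x ↦ by
      rw [← mul_assoc, ← exp_add]
      push_cast
      ring_nf
  simp only [fourierStar, hshift]
  rw [integral_const_mul,
    integral_add_right_eq_self (fun x : ℝ ↦ exp (I * ((k * x : ℝ) : ℂ)) * f x)]

lemma integrable_marchaudIntegral (hα : α ∈ Ioo (0 : ℝ) 1) (hf : Differentiable ℝ f)
    (hfi : Integrable f) (hf' : Integrable (deriv f)) (s : ℝ) :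
    Integrable (marchaudIntegral α s f) :=
  (integrable_prod_comp_add_mul_sub_div hα hf hfi hf' s).integral_prod_left

lemma fourierStar_marchaudIntegral (hα : α ∈ Ioo (0 : ℝ) 1) (hf : Differentiable ℝ f)
    (hfi : Integrable f) (hf' : Integrable (deriv f)) (s k : ℝ) :
    fourierStar (marchaudIntegral α s f) k =
      marchaudSymbol α (I * ((k * s : ℝ) : ℂ)) * fourierStar f k := by
  have hprod : Integrable (Function.uncurry fun x t : ℝ ↦ exp (I * ((k * x : ℝ) : ℂ)) *
      ((f (x + s * t) - f x) / ((t ^ (1 + α) : ℝ) : ℂ)))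
      (volume.prod (volume.restrict (Ioi 0))) :=
    (integrable_prod_comp_add_mul_sub_div hα hf hfi hf' s).bdd_mul (c := 1)
      (Continuous.aestronglyMeasurable (by fun_prop))
      (.of_forall fun _ ↦ (norm_exp_I_mul_ofReal _).le)
  have hincr : ∀ t : ℝ,
      fourierStar (fun x ↦ (f (x + s * t) - f x) / ((t ^ (1 + α) : ℝ) : ℂ)) k =
        (exp (-(I * ((k * s : ℝ) : ℂ) * t)) - 1) / ((t ^ (1 + α) : ℝ) : ℂ) * fourierStar f k :=
    fun t ↦ by
      rw [fourierStar_div_const, fourierStar_sub (hfi.comp_add_right (s * t)) hfi,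
        fourierStar_comp_add, ← mul_assoc k, ofReal_mul (k * s), ← mul_assoc I]
      ring
  calc fourierStar (marchaudIntegral α s f) k
      = ∫ x : ℝ, ∫ t in Ioi (0 : ℝ), exp (I * ((k * x : ℝ) : ℂ)) *
          ((f (x + s * t) - f x) / ((t ^ (1 + α) : ℝ) : ℂ)) := by
        simp only [fourierStar, marchaudIntegral, integral_const_mul]
    _ = ∫ t in Ioi (0 : ℝ),
          fourierStar (fun x ↦ (f (x + s * t) - f x) / ((t ^ (1 + α) : ℝ) : ℂ)) k :=
        integral_integral_swap hprod
    _ = marchaudSymbol α (I * ((k * s : ℝ) : ℂ)) * fourierStar f k := by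
        simp only [hincr, integral_mul_const, marchaudSymbol]

/-- The Riesz–Feller derivative of order `α` and skewness `θ` in its pointwise integral form, which
represents the operator for `0 < α < 1`. -/
noncomputable def rieszFellerDeriv (α θ : ℝ) (f : ℝ → ℂ) (x : ℝ) : ℂ :=
  ((Real.Gamma (1 + α) / π : ℝ) : ℂ) *
    (((Real.sin ((α + θ) * π / 2) : ℝ) : ℂ) * marchaudIntegral α 1 f x +
      ((Real.sin ((α - θ) * π / 2) : ℝ) : ℂ) * marchaudIntegral α (-1) f x)

lemma fourierStar_rieszFellerDeriv (hα : α ∈ Ioo (0 : ℝ) 1) (θ : ℝ) (hf : Differentiable ℝ f)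
    (hfi : Integrable f) (hf' : Integrable (deriv f)) (k : ℝ) :
    fourierStar (rieszFellerDeriv α θ f) k =
      -(((|k| ^ α : ℝ) : ℂ) * exp (I * ((Real.sign k * θ * π / 2 : ℝ) : ℂ))) *
        fourierStar f k := by
  have hint := integrable_marchaudIntegral hα hf hfi hf'
  unfold rieszFellerDeriv
  rw [fourierStar_const_mul, fourierStar_add ((hint 1).const_mul _) ((hint (-1)).const_mul _),
    fourierStar_const_mul, fourierStar_const_mul,
    fourierStar_marchaudIntegral hα hf hfi hf', fourierStar_marchaudIntegral hα hf hfi hf',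
    mul_one, mul_neg_one, ← rieszFeller_symbol_eq hα]
  ring

end Fourier

theorem riesz_feller_fourier_symbol_general {α : ℝ} (hα : α ∈ Ioo (0 : ℝ) 1) (θ : ℝ) {f : ℝ → ℂ}
    (hf : Differentiable ℝ f) (hfi : Integrable f) (hf' : Integrable (deriv f)) (D : ℝ → ℂ)
    (hD : ∀ x : ℝ, D x = ((Real.Gamma (1 + α) / π : ℝ) : ℂ) *
      (((Real.sin ((α + θ) * π / 2) : ℝ) : ℂ) *
          (∫ ξ in Ioi (0 : ℝ), (f (x + ξ) - f x) / ((ξ ^ (1 + α) : ℝ) : ℂ)) +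
        ((Real.sin ((α - θ) * π / 2) : ℝ) : ℂ) *
          ∫ ξ in Ioi (0 : ℝ), (f (x - ξ) - f x) / ((ξ ^ (1 + α) : ℝ) : ℂ))) :
    (∀ x : ℝ,
      IntegrableOn (fun ξ : ℝ ↦ (f (x + ξ) - f x) / ((ξ ^ (1 + α) : ℝ) : ℂ)) (Ioi 0) ∧
      IntegrableOn (fun ξ : ℝ ↦ (f (x - ξ) - f x) / ((ξ ^ (1 + α) : ℝ) : ℂ)) (Ioi 0)) ∧
    ∀ k : ℝ, ∫ x : ℝ, exp (I * ((k * x : ℝ) : ℂ)) * D x =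
      -(((|k| ^ α : ℝ) : ℂ) * exp (I * ((Real.sign k * θ * π / 2 : ℝ) : ℂ))) *
        ∫ x : ℝ, exp (I * ((k * x : ℝ) : ℂ)) * f x := by
  have hD' : D = rieszFellerDeriv α θ f := funext fun x ↦ by
    simp only [hD, rieszFellerDeriv, marchaudIntegral, one_mul, neg_one_mul, ← sub_eq_add_neg]
  refine ⟨fun x ↦ ⟨?_, ?_⟩, fun k ↦ ?_⟩
  · simpa only [one_mul] using
      integrableOn_comp_add_mul_sub_div hα one_ne_zero hf.continuous hfi (hf x)
  · simpa only [neg_one_mul, ← sub_eq_add_neg] using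
      integrableOn_comp_add_mul_sub_div hα (neg_ne_zero.2 one_ne_zero) hf.continuous hfi (hf x)
  · exact hD' ▸ fourierStar_rieszFellerDeriv hα θ hf hfi hf' k

/-- For `α ∈ (0,1)`, `|θ| ≤ α`, and a Schwartz function `f`, the integrals in the
Riesz–Feller derivative
`(D_θ^α f)(x) = (Γ(1+α)/π) { sin((α+θ)π/2) ∫₀^∞ (f(x+ξ)-f(x)) ξ^{-1-α} dξ
               + sin((α-θ)π/2) ∫₀^∞ (f(x-ξ)-f(x)) ξ^{-1-α} dξ }`
converge absolutely, and its Fourier transform satisfies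
`(D_θ^α f)^*(k) = -|k|^α e^{i sign(k) θπ/2} f^*(k)` with the convention
`f^*(k) = ∫ e^{ikx} f(x) dx`. -/
theorem riesz_feller_fourier_symbol (α θ : ℝ) (hα : α ∈ Set.Ioo (0 : ℝ) 1)
    (hθ : |θ| ≤ α) (f : SchwartzMap ℝ ℂ) (D : ℝ → ℂ)
    (hD : ∀ x : ℝ, D x = ((Real.Gamma (1 + α) / π : ℝ) : ℂ) *
      (((Real.sin ((α + θ) * π / 2) : ℝ) : ℂ) *
          (∫ ξ in Set.Ioi (0 : ℝ), (f (x + ξ) - f x) / ((ξ ^ (1 + α) : ℝ) : ℂ)) +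
        ((Real.sin ((α - θ) * π / 2) : ℝ) : ℂ) *
          ∫ ξ in Set.Ioi (0 : ℝ), (f (x - ξ) - f x) / ((ξ ^ (1 + α) : ℝ) : ℂ))) :
    (∀ x : ℝ,
      IntegrableOn (fun ξ : ℝ => (f (x + ξ) - f x) / ((ξ ^ (1 + α) : ℝ) : ℂ))
        (Set.Ioi 0) ∧
      IntegrableOn (fun ξ : ℝ => (f (x - ξ) - f x) / ((ξ ^ (1 + α) : ℝ) : ℂ))
        (Set.Ioi 0)) ∧
    ∀ k : ℝ, ∫ x : ℝ, Complex.exp (Complex.I * ((k * x : ℝ) : ℂ)) * D x =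
      -(((|k| ^ α : ℝ) : ℂ) *
          Complex.exp (Complex.I * ((Real.sign k * θ * π / 2 : ℝ) : ℂ))) *
        ∫ x : ℝ, Complex.exp (Complex.I * ((k * x : ℝ) : ℂ)) * f x := by
  exact riesz_feller_fourier_symbol_general hα θ f.differentiable f.integrable
    (SchwartzMap.derivCLM ℝ ℂ f).integrable D hD
end
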